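/- arXiv:0708.2890 — 2 statements merged into one kernel-verified Lean document; each statement's English description precedes it below -/
import Mathlib

section
/- Let G = SO₃(ℂ) act on V = R₄, the 5-dimensional irreducible representation of SL₂(ℂ) (which factors through SO₃). Then G' = G: every element of GL(V) preserving all G-invariant polynomials lies in the image of SO₃. -/
noncomputable section

/-- A function `V → ℂ` is a polynomial function if it lies in the subalgebra of
functions generated by the linear functionals, i.e. it is given by a polynomial
in linear coordinates. -/
def IsPolyFun {V : Type*} [AddCommGroup V] [Module ℂ V] (f : V → ℂ) : Prop :=
  f ∈ Algebra.adjoin ℂ (Set.range fun l : V →ₗ[ℂ] ℂ => (l : V → ℂ))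

/-- Given a subgroup `G` of `GL(V)`, the group `G'` of all linear automorphisms of `V`
preserving every `G`-invariant polynomial function on `V`. -/
def primeGroup {V : Type*} [AddCommGroup V] [Module ℂ V]
    (G : Subgroup (V ≃ₗ[ℂ] V)) : Subgroup (V ≃ₗ[ℂ] V) where
  carrier := {φ | ∀ f : V → ℂ, IsPolyFun f →
      (∀ g ∈ G, ∀ v : V, f (g v) = f v) → ∀ v : V, f (φ v) = f v}
  one_mem' := by intro f _ _ v; rfl
  mul_mem' := by
    intro a b ha hb f hf hinv v
    have h2 : f (a (b v)) = f (b v) := ha f hf hinv (b v)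
    exact h2.trans (hb f hf hinv v)
  inv_mem' := by
    intro a ha f hf hinv v
    have h := ha f hf hinv (a⁻¹ v)
    have : a (a⁻¹ v) = v := a.apply_symm_apply v
    rw [this] at h
    exact h.symm

/-- The algebraic exponential of an endomorphism of a finite-dimensional space
(intended for nilpotent endomorphisms, where the series is a finite sum). -/
def endExp {g : Type*} [AddCommGroup g] [Module ℂ g] [FiniteDimensional ℂ g]
    (A : Module.End ℂ g) : Module.End ℂ g :=
  ∑ k ∈ Finset.range (Module.finrank ℂ g + 1), (k.factorial : ℂ)⁻¹ • A ^ k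

/-- The adjoint group `G = Aut(g)⁰` of a semisimple Lie algebra `g`: the subgroup of
`GL(g)` generated by the exponentials of nilpotent inner derivations `ad x`. -/
def adjointGroup (g : Type*) [LieRing g] [LieAlgebra ℂ g] [FiniteDimensional ℂ g] :
    Subgroup (g ≃ₗ[ℂ] g) :=
  Subgroup.closure {u : g ≃ₗ[ℂ] g | ∃ x : g,
    IsNilpotent (LieAlgebra.ad ℂ g x) ∧ (u : g →ₗ[ℂ] g) = endExp (LieAlgebra.ad ℂ g x)}

/-- The subgroup of `GL(g)` fixing a subalgebra `t` pointwise. -/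
def pointwiseStab {g : Type*} [LieRing g] [LieAlgebra ℂ g]
    (t : LieSubalgebra ℂ g) : Subgroup (g ≃ₗ[ℂ] g) where
  carrier := {u | ∀ x ∈ t, u x = x}
  one_mem' := by intro x _; rfl
  mul_mem' := by
    intro a b ha hb x hx
    have : a (b x) = a x := by rw [hb x hx]
    exact this.trans (ha x hx)
  inv_mem' := by
    intro a ha x hx
    conv_lhs => rw [← ha x hx]
    exact a.symm_apply_apply x

/-- The maximal torus of the adjoint group corresponding to a Cartan subalgebra `t`:
the elements of the adjoint group acting trivially on `t`. -/
def maximalTorus (g : Type*) [LieRing g] [LieAlgebra ℂ g] [FiniteDimensional ℂ g]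
    (t : LieSubalgebra ℂ g) : Subgroup (g ≃ₗ[ℂ] g) :=
  adjointGroup g ⊓ pointwiseStab t

namespace Stmt18

/-- A representation of `SL₂(ℂ)` is polynomial (algebraic) if all its matrix
coefficients are polynomial functions of the matrix entries. -/
def IsPolynomialRep {W : Type} [AddCommGroup W] [Module ℂ W]
    (ρ : Matrix.SpecialLinearGroup (Fin 2) ℂ →* (W ≃ₗ[ℂ] W)) : Prop :=
  ∀ (l : W →ₗ[ℂ] ℂ) (w : W), ∃ p : MvPolynomial (Fin 2 × Fin 2) ℂ,
    ∀ g : Matrix.SpecialLinearGroup (Fin 2) ℂ,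
      l (ρ g w) = MvPolynomial.eval (fun ij => (g : Matrix (Fin 2) (Fin 2) ℂ) ij.1 ij.2) p

/-- Irreducibility of a representation. -/
def IsIrreducibleRep {W : Type} [AddCommGroup W] [Module ℂ W]
    (ρ : Matrix.SpecialLinearGroup (Fin 2) ℂ →* (W ≃ₗ[ℂ] W)) : Prop :=
  ∀ U : Submodule ℂ W, (∀ g : Matrix.SpecialLinearGroup (Fin 2) ℂ, ∀ w ∈ U, ρ g w ∈ U) →
    U = ⊥ ∨ U = ⊤

abbrev V5 := Fin 5 → ℂ

def Iq (c : V5) : ℂ := 12 * c 0 * c 4 - 3 * c 1 * c 3 + c 2 * c 2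
def Jq (c : V5) : ℂ := 72 * c 0 * c 2 * c 4 + 9 * c 1 * c 2 * c 3 - 27 * c 0 * c 3 * c 3
  - 27 * c 4 * c 1 * c 1 - 2 * c 2 * c 2 * c 2
/-- derivative of `Jq` at `c` in direction `w` -/
def Dq (c w : V5) : ℂ :=
  (72 * c 2 * c 4 - 27 * c 3 * c 3) * w 0 + (9 * c 2 * c 3 - 54 * c 4 * c 1) * w 1
  + (72 * c 0 * c 4 + 9 * c 1 * c 3 - 6 * c 2 * c 2) * w 2
  + (9 * c 1 * c 2 - 54 * c 0 * c 3) * w 3 + (72 * c 0 * c 2 - 27 * c 1 * c 1) * w 4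
def Bq (c w : V5) : ℂ := 12 * (c 0 * w 4 + w 0 * c 4) - 3 * (c 1 * w 3 + w 1 * c 3) + 2 * c 2 * w 2

lemma Dq_eq (c w : V5) : Dq c w = (Jq (c + w) - Jq (c - w)) / 2 - Jq w := by
  simp only [Dq, Jq, Pi.add_apply, Pi.sub_apply]; ring
lemma Bq_eq (c w : V5) : Bq c w = Iq (c + w) - Iq c - Iq w := by
  simp only [Bq, Iq, Pi.add_apply]; ring

/-- substitution `F(x,y) ↦ F(a x + c y, b x + d y)` on `F = ∑ v_k x^(4-k) y^k` -/
def S (a b c d : ℂ) (v : V5) : V5 := ![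
  v 0 * a^4 + v 1 * a^3 * b + v 2 * a^2 * b^2 + v 3 * a * b^3 + v 4 * b^4,
  v 0 * (4 * a^3 * c) + v 1 * (3 * a^2 * c * b + a^3 * d) + v 2 * (2 * a * c * b^2 + 2 * a^2 * b * d)
    + v 3 * (c * b^3 + 3 * a * b^2 * d) + v 4 * (4 * b^3 * d),
  v 0 * (6 * a^2 * c^2) + v 1 * (3 * a * c^2 * b + 3 * a^2 * c * d)
    + v 2 * (c^2 * b^2 + 4 * a * b * c * d + a^2 * d^2)
    + v 3 * (3 * a * b * d^2 + 3 * c * b^2 * d) + v 4 * (6 * b^2 * d^2),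
  v 0 * (4 * a * c^3) + v 1 * (c^3 * b + 3 * a * c^2 * d) + v 2 * (2 * c^2 * b * d + 2 * a * c * d^2)
    + v 3 * (a * d^3 + 3 * c * b * d^2) + v 4 * (4 * b * d^3),
  v 0 * c^4 + v 1 * c^3 * d + v 2 * c^2 * d^2 + v 3 * c * d^3 + v 4 * d^4]

def ev (v : V5) (x y : ℂ) : ℂ :=
  v 0 * x^4 + v 1 * x^3 * y + v 2 * x^2 * y^2 + v 3 * x * y^3 + v 4 * y^4

lemma ev_S (a b c d x y : ℂ) (v : V5) : ev (S a b c d v) x y = ev v (a*x+c*y) (b*x+d*y) := by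
  simp [ev, S]; ring

lemma ev_inj (v w : V5) (h : ∀ t, ev v 1 t = ev w 1 t) : v = w := by
  have h0 := h 0
  have h1 := h 1
  have h2 := h (-1)
  have h3 := h 2
  have h4 := h (-2)
  simp only [ev] at h0 h1 h2 h3 h4
  have e0 : v 0 = w 0 := by linear_combination h0
  have e4 : v 4 = w 4 := by
    linear_combination (h3 + h4 - 4 * (h1 + h2) + 6 * h0) / 24
  have e3 : v 3 = w 3 := by linear_combination (h3 - h4 - 2 * (h1 - h2)) / 12
  have e2 : v 2 = w 2 := by linear_combination (h1 + h2) / 2 - e0 - e4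
  have e1 : v 1 = w 1 := by linear_combination (h1 - h2) / 2 - e3
  funext i; fin_cases i <;> assumption

lemma Iq_S (a b c d : ℂ) (h : a * d - b * c = 1) (v : V5) : Iq (S a b c d v) = Iq v := by
  have : Iq (S a b c d v) = (a * d - b * c)^4 * Iq v := by simp [Iq, S]; ring
  rw [this, h]; ring
lemma Jq_S (a b c d : ℂ) (h : a * d - b * c = 1) (v : V5) : Jq (S a b c d v) = Jq v := by
  have : Jq (S a b c d v) = (a * d - b * c)^6 * Jq v := by simp [Jq, S]; ring
  rw [this, h]; ring

lemma fourth_power (v : V5) (h : ∀ w, Dq v w = 0) :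
    ∃ x y : ℂ, v = ![x^4, 4*x^3*y, 6*x^2*y^2, 4*x*y^3, y^4] := by
  have h0 := h (Pi.single 0 1)
  have h1 := h (Pi.single 1 1)
  have h2 := h (Pi.single 2 1)
  have h3 := h (Pi.single 3 1)
  have h4 := h (Pi.single 4 1)
  simp [Dq] at h0 h1 h2 h3 h4
  by_cases hz : v 0 = 0
  · obtain ⟨y, hy⟩ := IsAlgClosed.exists_pow_nat_eq (v 4) (n := 4) (by norm_num)
    have e1 : v 1 = 0 := by
      rw [hz] at h4; simpa using h4
    have e2 : v 2 = 0 := by rw [hz, e1] at h2; simpa using h2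
    have e3 : v 3 = 0 := by rw [e2] at h0; simpa using h0
    refine ⟨0, y, ?_⟩
    funext i; fin_cases i <;> simp [hz, e1, e2, e3, hy]
  · obtain ⟨x, hx⟩ := IsAlgClosed.exists_pow_nat_eq (v 0) (n := 4) (by norm_num)
    have hx0 : x ≠ 0 := by rintro rfl; apply hz; rw [← hx]; simp
    obtain ⟨y, hy⟩ : ∃ y, v 1 = 4 * x^3 * y := ⟨v 1 / (4 * x^3), by field_simp⟩
    have e2 : v 2 = 6 * x^2 * y^2 := by
      apply mul_left_cancel₀ hz
      rw [hy, ← hx] at h4; rw [← hx]; linear_combination h4 / 72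
    have e3 : v 3 = 4 * x * y^3 := by
      apply mul_left_cancel₀ hz
      rw [hy, e2, ← hx] at h3; rw [← hx]; linear_combination -h3 / 54
    have e4 : v 4 = y^4 := by
      apply mul_left_cancel₀ hz
      rw [hy, e2, e3, ← hx] at h2; rw [← hx]; linear_combination h2 / 72
    refine ⟨x, y, ?_⟩
    funext i; fin_cases i <;> simp [hx, hy, e2, e3, e4]

lemma lin_expand (φ : V5 →ₗ[ℂ] V5) (v : V5) : φ v = ∑ i, v i • φ (Pi.single i 1) := by
  conv_lhs => rw [← LinearMap.sum_single_apply (fun _ : Fin 5 => ℂ) v]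
  simp only [map_sum]
  refine Finset.sum_congr rfl fun i _ => ?_
  rw [← map_smul, ← Pi.single_smul]; simp

/-- normalized case -/
lemma fixed_case (φ : V5 →ₗ[ℂ] V5) (hI : ∀ v, Iq (φ v) = Iq v) (hJ : ∀ v, Jq (φ v) = Jq v)
    (h0 : φ (Pi.single 0 1) = Pi.single 0 1) (h4 : φ (Pi.single 4 1) = Pi.single 4 1) :
    ∃ ε : ℂ, ε ^ 2 = 1 ∧ ∀ v, φ v = ![v 0, ε * v 1, v 2, ε * v 3, v 4] := by
  have hB : ∀ v w, Bq (φ v) (φ w) = Bq v w := fun v w => by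
    rw [Bq_eq, Bq_eq, ← map_add, hI, hI, hI]
  have c4 : ∀ v, φ v 4 = v 4 := fun v => by
    have := hB v (Pi.single 0 1)
    rw [h0] at this; simpa [Bq] using this
  have c0 : ∀ v, φ v 0 = v 0 := fun v => by
    have := hB v (Pi.single 4 1)
    rw [h4] at this; simpa [Bq] using this
  have key : ∀ v (s t : ℂ), Jq (φ v + s • Pi.single 0 1 + t • Pi.single 4 1) =
      Jq (v + s • Pi.single 0 1 + t • Pi.single 4 1) := fun v s t => by
    rw [← hJ (v + _ + _), map_add, map_add, map_smul, map_smul, h0, h4]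
  have c2 : ∀ v, φ v 2 = v 2 := fun v => by
    have a := key v 1 1
    have b := key v 1 0
    have c := key v 0 1
    have d := key v 0 0
    simp [Jq, c0, c4] at a b c d
    linear_combination (a - b - c + d) / 72
  have c3 : ∀ v, φ v 3 ^ 2 = v 3 ^ 2 := fun v => by
    have b := key v 1 0
    have d := key v 0 0
    simp [Jq, c0, c4, c2] at b d
    linear_combination (d - b) / 27
  have c1 : ∀ v, φ v 1 ^ 2 = v 1 ^ 2 := fun v => by
    have b := key v 0 1
    have d := key v 0 0
    simp [Jq, c0, c4, c2] at b d
    linear_combination (d - b) / 27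
  have c13 : ∀ v, φ v 1 * φ v 3 = v 1 * v 3 := fun v => by
    have := hI v
    simp [Iq, c0, c2, c4] at this
    linear_combination this / 3
  have v2 : φ (Pi.single 2 1) = Pi.single 2 1 := by
    funext i; fin_cases i
    · simp [c0]
    · simpa using c1 (Pi.single 2 1)
    · simp [c2]
    · simpa using c3 (Pi.single 2 1)
    · simp [c4]
  have v1 : φ (Pi.single 1 1) = ![0, φ (Pi.single 1 1) 1, 0, 0, 0] := by
    funext i; fin_cases i
    · simp [c0]
    · simp
    · simp [c2]
    · simpa using c3 (Pi.single 1 1)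
    · simp [c4]
  have v3 : φ (Pi.single 3 1) = ![0, 0, 0, φ (Pi.single 3 1) 3, 0] := by
    funext i; fin_cases i
    · simp [c0]
    · simpa using c1 (Pi.single 3 1)
    · simp [c2]
    · simp
    · simp [c4]
  set ε := φ (Pi.single 1 1) 1 with hε
  set δ := φ (Pi.single 3 1) 3 with hδ
  have he : ε ^ 2 = 1 := by simpa using c1 (Pi.single 1 1)
  have hed : ε * δ = 1 := by
    have := c13 (Pi.single 1 1 + Pi.single 3 1)
    rw [map_add, v1, v3] at this
    simpa using this
  have hd : δ = ε := by linear_combination ε * hed - δ * he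
  refine ⟨ε, he, fun v => ?_⟩
  rw [lin_expand, Fin.sum_univ_five, h0, v1, v2, v3, h4, hd]
  funext i
  simp only [Pi.add_apply, Pi.smul_apply]
  fin_cases i <;> simp [mul_comm]

lemma S_add (a b c d : ℂ) (v w : V5) : S a b c d (v + w) = S a b c d v + S a b c d w := by
  funext i; fin_cases i <;> simp [S] <;> ring
lemma S_smul (a b c d r : ℂ) (v : V5) : S a b c d (r • v) = r • S a b c d v := by
  funext i; fin_cases i <;> simp [S] <;> ring
def Slin (a b c d : ℂ) : V5 →ₗ[ℂ] V5 where
  toFun := S a b c d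
  map_add' := S_add a b c d
  map_smul' := S_smul a b c d

lemma S_S (a b c d a' b' c' d' : ℂ) (v : V5) :
    S a' b' c' d' (S a b c d v) = S (a'*a+b'*c) (a'*b+b'*d) (c'*a+d'*c) (c'*b+d'*d) v := by
  apply ev_inj; intro t
  rw [ev_S, ev_S, ev_S]; congr 1 <;> ring
lemma S_one (v : V5) : S 1 0 0 1 v = v := by
  apply ev_inj; intro t
  rw [ev_S]; simp

theorem step2 (φ : V5 ≃ₗ[ℂ] V5) (hI : ∀ v, Iq (φ v) = Iq v) (hJ : ∀ v, Jq (φ v) = Jq v) :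
    ∃ a b c d : ℂ, a * d - b * c = 1 ∧ ∀ v, φ v = S a b c d v := by
  have hB : ∀ v w, Bq (φ v) (φ w) = Bq v w := fun v w => by
    rw [Bq_eq, Bq_eq, ← map_add, hI, hI, hI]
  have hD : ∀ v w, Dq (φ v) (φ w) = Dq v w := fun v w => by
    rw [Dq_eq, Dq_eq, ← map_add, ← map_sub, hJ, hJ, hJ]
  have hD' : ∀ v, (∀ w, Dq v w = 0) → ∀ w, Dq (φ v) w = 0 := fun v h w => by
    rw [← φ.apply_symm_apply w, hD, h]
  obtain ⟨x, y, hxy⟩ := fourth_power (φ (Pi.single 0 1)) (hD' _ (fun w => by simp [Dq]))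
  obtain ⟨z, u, hzu⟩ := fourth_power (φ (Pi.single 4 1)) (hD' _ (fun w => by simp [Dq]))
  have hdet : (x * u - y * z) ^ 4 = 1 := by
    have := hB (Pi.single 0 1) (Pi.single 4 1)
    rw [hxy, hzu] at this
    simp [Bq] at this
    linear_combination this / 12
  obtain ⟨z', u', hzu', hdet'⟩ : ∃ z' u' : ℂ,
      φ (Pi.single 4 1) = ![z'^4, 4*z'^3*u', 6*z'^2*u'^2, 4*z'*u'^3, u'^4] ∧ x * u' - y * z' = 1 := by
    set r := (x * u - y * z) ^ 3 with hr
    have hr4 : r ^ 4 = 1 := by rw [hr, pow_right_comm, hdet]; simp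
    refine ⟨r * z, r * u, ?_, ?_⟩
    · rw [hzu]; funext i; fin_cases i <;> simp <;>
      [linear_combination -z^4 * hr4; linear_combination -4*z^3*u * hr4;
       linear_combination -6*z^2*u^2 * hr4; linear_combination -4*z*u^3 * hr4;
       linear_combination -u^4 * hr4]
    · rw [hr]; linear_combination hdet
  set ψ : V5 →ₗ[ℂ] V5 := (Slin u' (-z') (-y) x) ∘ₗ φ.toLinearMap with hψ
  have ψ_apply : ∀ v, ψ v = S u' (-z') (-y) x (φ v) := fun v => rfl
  have hdi : u' * x - (-z') * (-y) = 1 := by linear_combination hdet'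
  have k0 : φ (Pi.single 0 1) = S x z' y u' (Pi.single 0 1) := by
    rw [hxy]; funext i; fin_cases i <;> simp [S]
  have k4 : φ (Pi.single 4 1) = S x z' y u' (Pi.single 4 1) := by
    rw [hzu']; funext i; fin_cases i <;> simp [S] <;> ring
  have inv1 : ∀ v, S u' (-z') (-y) x (S x z' y u' v) = v := fun v => by
    rw [S_S]
    conv_rhs => rw [← S_one v]
    congr 1
    · linear_combination hdi
    · ring
    · ring
    · linear_combination hdi
  have inv2 : ∀ v, S x z' y u' (S u' (-z') (-y) x v) = v := fun v => by
    rw [S_S]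
    conv_rhs => rw [← S_one v]
    congr 1
    · linear_combination hdi
    · ring
    · ring
    · linear_combination hdi
  obtain ⟨ε, hε, hv⟩ := fixed_case ψ
    (fun v => by rw [ψ_apply, Iq_S _ _ _ _ hdi, hI])
    (fun v => by rw [ψ_apply, Jq_S _ _ _ _ hdi, hJ])
    (by rw [ψ_apply, k0, inv1]) (by rw [ψ_apply, k4, inv1])
  obtain ⟨s, hs⟩ := IsAlgClosed.exists_pow_nat_eq ε (n := 2) (by norm_num)
  have hs4 : s ^ 4 = 1 := by rw [show s ^ 4 = (s ^ 2) ^ 2 by ring, hs, hε]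
  have hψS : ∀ v, ψ v = S s 0 0 (s^3) v := fun v => by
    rw [hv, ← hs]; funext i; fin_cases i <;> simp [S]
    · rw [hs4]; simp
    · linear_combination (-v 1 * s ^ 2) * hs4
    · linear_combination (-v 2 * (s ^ 4 + 1)) * hs4
    · linear_combination (-v 3 * s ^ 2 * (s ^ 4 + 1)) * hs4
    · linear_combination (-v 4 * (s ^ 8 + s ^ 4 + 1)) * hs4
  refine ⟨x * s, z' * s ^ 3, y * s, u' * s ^ 3, ?_, fun v => ?_⟩
  · linear_combination s ^ 4 * hdet' + hs4
  · rw [← inv2 (φ v), ← ψ_apply, hψS, S_S]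
    congr 1 <;> ring

abbrev SL := Matrix.SpecialLinearGroup (Fin 2) ℂ
def sl (a b c d : ℂ) (h : a * d - b * c = 1) : SL :=
  ⟨!![a, b; c, d], by rw [Matrix.det_fin_two_of, h]⟩
def up (t : ℂ) : SL := sl 1 t 0 1 (by ring)
def lo (t : ℂ) : SL := sl 1 0 t 1 (by ring)
def tor (a : ℂ) (ha : a ≠ 0) : SL := sl a 0 0 a⁻¹ (by field_simp; ring)

lemma sl_ext {g h : SL} (h00 : g.1 0 0 = h.1 0 0) (h01 : g.1 0 1 = h.1 0 1)
    (h10 : g.1 1 0 = h.1 1 0) (h11 : g.1 1 1 = h.1 1 1) : g = h := by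
  apply Subtype.ext
  ext i j
  fin_cases i <;> fin_cases j <;> assumption

lemma mul00 (g h : SL) : (g * h).1 0 0 = g.1 0 0 * h.1 0 0 + g.1 0 1 * h.1 1 0 := by
  simp [Matrix.mul_apply, Fin.sum_univ_two]
lemma mul01 (g h : SL) : (g * h).1 0 1 = g.1 0 0 * h.1 0 1 + g.1 0 1 * h.1 1 1 := by
  simp [Matrix.mul_apply, Fin.sum_univ_two]
lemma mul10 (g h : SL) : (g * h).1 1 0 = g.1 1 0 * h.1 0 0 + g.1 1 1 * h.1 1 0 := by
  simp [Matrix.mul_apply, Fin.sum_univ_two]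
lemma mul11 (g h : SL) : (g * h).1 1 1 = g.1 1 0 * h.1 0 1 + g.1 1 1 * h.1 1 1 := by
  simp [Matrix.mul_apply, Fin.sum_univ_two]
lemma det_eq (g : SL) : g.1 0 0 * g.1 1 1 - g.1 0 1 * g.1 1 0 = 1 := by
  rw [← Matrix.det_fin_two]; exact g.2

lemma lo_add (s t : ℂ) : lo (s + t) = lo s * lo t := by
  apply sl_ext <;> simp only [mul00, mul01, mul10, mul11] <;> simp [lo, sl]
lemma up_add (s t : ℂ) : up (s + t) = up s * up t := by
  apply sl_ext <;> simp only [mul00, mul01, mul10, mul11] <;> simp [up, sl, add_comm]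
lemma to_mul (a b : ℂ) (ha : a ≠ 0) (hb : b ≠ 0) : tor (a * b) (mul_ne_zero ha hb) = tor a ha * tor b hb := by
  apply sl_ext <;> simp only [mul00, mul01, mul10, mul11] <;> simp [tor, sl, mul_comm]
lemma lo_zero : lo 0 = 1 := by
  apply sl_ext <;> simp [lo, sl]
lemma up_zero : up 0 = 1 := by
  apply sl_ext <;> simp [up, sl]
lemma to_one (h : (1:ℂ) ≠ 0) : tor 1 h = 1 := by
  apply sl_ext <;> simp [tor, sl]
lemma to_lo (a s : ℂ) (ha : a ≠ 0) : tor a ha * lo s = lo (s * (a⁻¹)^2) * tor a ha := by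
  apply sl_ext <;> simp only [mul00, mul01, mul10, mul11] <;> simp [tor, lo, sl] <;> field_simp
lemma up_to (a t : ℂ) (ha : a ≠ 0) : up t * tor a ha = tor a ha * up (t * (a⁻¹)^2) := by
  apply sl_ext <;> simp only [mul00, mul01, mul10, mul11] <;> simp [tor, up, sl] <;> field_simp
lemma big_cell (g : SL) (h : g.1 0 0 ≠ 0) :
    g = lo (g.1 1 0 / g.1 0 0) * (tor (g.1 0 0) h * up (g.1 0 1 / g.1 0 0)) := by
  have := det_eq g
  apply sl_ext <;> simp only [mul00, mul01, mul10, mul11] <;> simp [tor, up, lo, sl] <;> field_simp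
  linear_combination this

open Polynomial in
lemma coeff_unique (N : ℕ) (α β : ℕ → ℂ)
    (h : ∀ a : ℂ, a ≠ 0 → ∑ k ∈ Finset.range N, α k * a ^ k = ∑ k ∈ Finset.range N, β k * a ^ k) :
    ∀ k < N, α k = β k := by
  intro k hk
  have : (∑ k ∈ Finset.range N, C (α k) * X ^ k : ℂ[X]) = ∑ k ∈ Finset.range N, C (β k) * X ^ k := by
    apply Polynomial.eq_of_infinite_eval_eq
    apply Set.Infinite.mono (s := {a : ℂ | a ≠ 0})
    · intro a ha
      simpa [eval_finsetSum] using h a ha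
    · exact (Set.finite_singleton (0:ℂ)).infinite_compl
  have := congrArg (fun p => p.coeff k) this
  simpa [finsetSum_coeff, coeff_C_mul, coeff_X_pow, hk] using this

lemma lin_poly (s : Set ℂ) (f : ℂ → (V5 →ₗ[ℂ] ℂ))
    (h : ∀ w, ∃ P : Polynomial ℂ, ∀ a ∈ s, f a w = P.eval a) :
    ∃ (c : ℕ → (V5 →ₗ[ℂ] ℂ)) (N : ℕ), ∀ a ∈ s, ∀ w,
      f a w = ∑ k ∈ Finset.range N, c k w * a ^ k := by
  choose P hP using fun i : Fin 5 => h (Pi.single i 1)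
  set N := (∑ i, (P i).natDegree) + 1
  have hN : ∀ i, (P i).natDegree < N := fun i =>
    Nat.lt_succ_of_le (Finset.single_le_sum (f := fun i => (P i).natDegree)
      (fun _ _ => Nat.zero_le _) (Finset.mem_univ i))
  refine ⟨fun k => ∑ i, (P i).coeff k • LinearMap.proj i, N, fun a ha w => ?_⟩
  have : f a w = ∑ i, w i * f a (Pi.single i 1) := by
    conv_lhs => rw [← LinearMap.sum_single_apply (fun _ : Fin 5 => ℂ) w]
    simp only [map_sum]
    refine Finset.sum_congr rfl fun i _ => ?_
    rw [← smul_eq_mul, ← map_smul, ← Pi.single_smul]; simp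
  rw [this]
  simp only [LinearMap.sum_apply, LinearMap.smul_apply, LinearMap.proj_apply, Finset.sum_mul]
  rw [Finset.sum_comm]
  refine Finset.sum_congr rfl fun i _ => ?_
  rw [hP i a ha, Polynomial.eval_eq_sum_range' (hN i), Finset.mul_sum]
  refine Finset.sum_congr rfl fun k _ => ?_
  simp only [smul_eq_mul]; ring

lemma mv_poly (q : Fin 2 × Fin 2 → Polynomial ℂ) (p : MvPolynomial (Fin 2 × Fin 2) ℂ) (t : ℂ) :
    MvPolynomial.eval (fun ij => (q ij).eval t) p = (MvPolynomial.aeval q p).eval t := by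
  induction p using MvPolynomial.induction_on with
  | C a => simp
  | add p q hp hq => simp [hp, hq]
  | mul_X p i hp => simp [hp]

lemma mv_laurent (p : MvPolynomial (Fin 2 × Fin 2) ℂ) :
    ∃ (N : ℕ) (Q : Polynomial ℂ), ∀ (a : ℂ) (ha : a ≠ 0),
      a ^ N * MvPolynomial.eval (fun ij => (tor a ha).1 ij.1 ij.2) p = Q.eval a := by
  induction p using MvPolynomial.induction_on with
  | C a => exact ⟨0, Polynomial.C a, by simp⟩
  | add p q hp hq =>
    obtain ⟨N, Q, h⟩ := hp
    obtain ⟨N', Q', h'⟩ := hq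
    refine ⟨N + N', Polynomial.X ^ N' * Q + Polynomial.X ^ N * Q', fun a ha => ?_⟩
    simp only [map_add, Polynomial.eval_add, Polynomial.eval_mul, Polynomial.eval_pow,
      Polynomial.eval_X, ← h a ha, ← h' a ha]
    ring
  | mul_X p i hp =>
    obtain ⟨N, Q, h⟩ := hp
    obtain ⟨R, hR⟩ : ∃ R : Polynomial ℂ, ∀ (a : ℂ) (ha : a ≠ 0),
        a * (tor a ha).1 i.1 i.2 = R.eval a := by
      obtain ⟨i, j⟩ := i
      fin_cases i <;> fin_cases j
      · exact ⟨Polynomial.X ^ 2, fun a ha => by simp [tor, sl]; ring⟩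
      · exact ⟨0, fun a ha => by simp [tor, sl]⟩
      · exact ⟨0, fun a ha => by simp [tor, sl]⟩
      · exact ⟨1, fun a ha => by simp [tor, sl, ha]⟩
    refine ⟨N + 1, Q * R, fun a ha => ?_⟩
    rw [Polynomial.eval_mul, ← h a ha, ← hR a ha]
    simp only [map_mul, MvPolynomial.eval_X]
    ring

section
variable (ρ : SL →* (V5 ≃ₗ[ℂ] V5))

lemma rho_mul (g h : SL) (w : V5) : ρ (g * h) w = ρ g (ρ h w) := by
  rw [map_mul]; rfl
lemma rho_one (w : V5) : ρ 1 w = w := by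
  rw [map_one]; rfl

lemma poly_lo (hρ : IsPolynomialRep ρ) (l : V5 →ₗ[ℂ] ℂ) (w : V5) :
    ∃ P : Polynomial ℂ, ∀ t, l (ρ (lo t) w) = P.eval t := by
  obtain ⟨p, hp⟩ := hρ l w
  refine ⟨MvPolynomial.aeval (fun ij => !![1, 0; Polynomial.X, 1] ij.1 ij.2) p, fun t => ?_⟩
  rw [hp, ← mv_poly]
  congr 2
  funext ⟨i, j⟩
  fin_cases i <;> fin_cases j <;> simp [lo, sl]

lemma poly_up (hρ : IsPolynomialRep ρ) (l : V5 →ₗ[ℂ] ℂ) (w : V5) :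
    ∃ P : Polynomial ℂ, ∀ t, l (ρ (up t) w) = P.eval t := by
  obtain ⟨p, hp⟩ := hρ l w
  refine ⟨MvPolynomial.aeval (fun ij => !![1, Polynomial.X; 0, 1] ij.1 ij.2) p, fun t => ?_⟩
  rw [hp, ← mv_poly]
  congr 2
  funext ⟨i, j⟩
  fin_cases i <;> fin_cases j <;> simp [up, sl]

/-- coefficient of a translate -/
lemma translate (N : ℕ) (c : ℕ → ℂ) (s t : ℂ) :
    ∑ k ∈ Finset.range N, c k * (t + s) ^ k =
      ∑ j ∈ Finset.range N, (∑ k ∈ Finset.range N, c k * (s ^ (k - j) * (k.choose j : ℂ))) * t ^ j := by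
  simp only [Finset.sum_mul]
  rw [Finset.sum_comm]
  refine Finset.sum_congr rfl fun k hk => ?_
  rw [add_pow, Finset.mul_sum]
  rw [Finset.mem_range] at hk
  rw [Finset.sum_subset (Finset.range_subset_range.2 (Nat.succ_le_of_lt hk))]
  · refine Finset.sum_congr rfl fun j _ => ?_
    ring
  · intro j _ hj
    rw [Finset.mem_range, not_lt] at hj
    rw [Nat.choose_eq_zero_of_lt (Nat.lt_of_succ_le hj)]; simp

/-- truncation of a list of functionals -/
lemma truncate (N : ℕ) (c : ℕ → (V5 →ₗ[ℂ] ℂ)) (h : ∃ k < N, c k ≠ 0) :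
    ∃ d < N, c d ≠ 0 ∧ ∀ k < N, d < k → c k = 0 := by
  classical
  obtain ⟨k, hk, hk'⟩ := h
  let F := (Finset.range N).filter fun k => c k ≠ 0
  have hF : F.Nonempty := ⟨k, by simp [F, hk, hk']⟩
  have hm := F.max'_mem hF
  simp only [F, Finset.mem_filter, Finset.mem_range] at hm
  refine ⟨F.max' hF, hm.1, hm.2, fun j hj hlt => ?_⟩
  by_contra hne
  exact absurd (F.le_max' j (by simp [F, hj, hne])) (not_le.2 hlt)

lemma exists_fixed (hρ : IsPolynomialRep ρ) :
    ∃ l : V5 →ₗ[ℂ] ℂ, l ≠ 0 ∧ ∀ t w, l (ρ (lo t) w) = l w := by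
  set m : V5 →ₗ[ℂ] ℂ := LinearMap.proj 0
  obtain ⟨c, N, hc⟩ := lin_poly Set.univ (fun t => m ∘ₗ (ρ (lo t)).toLinearMap) (fun w => by
    obtain ⟨P, hP⟩ := poly_lo ρ hρ m w
    exact ⟨P, fun a _ => hP a⟩)
  have hc' : ∀ a w, m (ρ (lo a) w) = ∑ k ∈ Finset.range N, c k w * a ^ k :=
    fun a w => hc a trivial w
  obtain ⟨d, hdN, hd, hmax⟩ := truncate N c (by
    by_contra! hall
    have := hc' 0 (Pi.single 0 1)
    rw [Finset.sum_eq_zero (fun k hk => by rw [hall k (Finset.mem_range.1 hk)]; simp),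
      lo_zero, rho_one] at this
    simp [m] at this)
  refine ⟨c d, hd, fun s w => ?_⟩
  have h1 : ∀ t, ∑ k ∈ Finset.range N, c k (ρ (lo s) w) * t ^ k =
      ∑ j ∈ Finset.range N, (∑ k ∈ Finset.range N, c k w * (s ^ (k - j) * (k.choose j : ℂ))) * t ^ j :=
    fun t => by
      rw [← translate N (fun k => c k w), ← hc', ← hc', lo_add, rho_mul]
  have h2 := coeff_unique N (fun k => c k (ρ (lo s) w)) _ (fun t _ => h1 t) d hdN
  beta_reduce at h2
  rw [h2, Finset.sum_eq_single d]
  · simp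
  · intro k hk hne
    rcases lt_or_gt_of_ne hne with h | h
    · rw [Nat.choose_eq_zero_of_lt h]; simp
    · rw [hmax k (Finset.mem_range.1 hk) h]; simp
  · intro h; exact absurd (Finset.mem_range.2 hdN) h

lemma exists_borel (hρ : IsPolynomialRep ρ) :
    ∃ (l : V5 →ₗ[ℂ] ℂ) (N k : ℕ), l ≠ 0 ∧ (∀ t w, l (ρ (lo t) w) = l w) ∧
      ∀ a (ha : a ≠ 0) w, a ^ N * l (ρ (tor a ha) w) = a ^ k * l w := by
  classical
  obtain ⟨l, hl, hfix⟩ := exists_fixed ρ hρ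
  choose p hp using fun i : Fin 5 => hρ l (Pi.single i 1)
  choose N' Q hQ using fun i => mv_laurent (p i)
  set N := ∑ i, N' i with hNdef
  have hN : ∀ i, N' i ≤ N := fun i => Finset.single_le_sum (f := N')
      (fun _ _ => Nat.zero_le _) (Finset.mem_univ i)
  let f : ℂ → (V5 →ₗ[ℂ] ℂ) := fun a =>
    if ha : a ≠ 0 then a ^ N • (l ∘ₗ (ρ (tor a ha)).toLinearMap) else 0
  have hf : ∀ a (ha : a ≠ 0) w, f a w = a ^ N * l (ρ (tor a ha) w) := fun a ha w => by
    simp [f, ha]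
  have hexp : ∀ a (ha : a ≠ 0) (w : V5), l (ρ (tor a ha) w) =
      ∑ i, w i * l (ρ (tor a ha) (Pi.single i 1)) := fun a ha w => by
    conv_lhs => rw [← LinearMap.sum_single_apply (fun _ : Fin 5 => ℂ) w]
    simp only [map_sum]
    refine Finset.sum_congr rfl fun i _ => ?_
    rw [← smul_eq_mul, ← map_smul, ← map_smul, ← Pi.single_smul]; simp
  obtain ⟨c, M, hc⟩ := lin_poly {a | a ≠ 0} f (fun w => by
    refine ⟨∑ i, Polynomial.C (w i) * (Polynomial.X ^ (N - N' i) * Q i), fun a ha => ?_⟩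
    rw [hf a ha, hexp a ha, Finset.mul_sum, Polynomial.eval_finsetSum]
    refine Finset.sum_congr rfl fun i _ => ?_
    simp only [Polynomial.eval_mul, Polynomial.eval_C, Polynomial.eval_pow, Polynomial.eval_X]
    rw [← hQ i a ha, hp i]
    have : a ^ N = a ^ (N - N' i) * a ^ N' i := by
      rw [← pow_add, Nat.sub_add_cancel (hN i)]
    rw [this]; ring)
  have hc' : ∀ a (ha : a ≠ 0) w, a ^ N * l (ρ (tor a ha) w) =
      ∑ k ∈ Finset.range M, c k w * a ^ k := fun a ha w => by
    rw [← hf a ha, hc a ha]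
  obtain ⟨k, hkM, hk⟩ : ∃ k < M, c k ≠ 0 := by
    by_contra! hall
    apply hl
    ext1 i
    ext
    have := hc' 1 one_ne_zero (Pi.single i 1)
    rw [Finset.sum_eq_zero (fun k hk => by rw [hall k (Finset.mem_range.1 hk)]; simp),
      to_one, rho_one] at this
    simpa using this
  refine ⟨c k, N, k, hk, fun s w => ?_, fun b hb w => ?_⟩
  · refine coeff_unique M (fun k => c k (ρ (lo s) w)) (fun k => c k w) (fun a ha => ?_) k hkM
    rw [← hc' a ha, ← hc' a ha, ← rho_mul, to_lo, rho_mul, hfix]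
  · refine coeff_unique M (fun k => b ^ N * c k (ρ (tor b hb) w)) (fun k => b ^ k * c k w)
      (fun a ha => ?_) k hkM
    have h1 := hc' a ha (ρ (tor b hb) w)
    have h2 := hc' (a * b) (mul_ne_zero ha hb) w
    rw [to_mul a b ha hb, rho_mul] at h2
    simp only [mul_assoc, ← Finset.mul_sum]
    rw [← h1]
    calc b ^ N * (a ^ N * l (ρ (tor a ha) (ρ (tor b hb) w))) = _ := by rw [← mul_assoc, ← mul_pow, mul_comm b a]
      _ = _ := h2
      _ = _ := Finset.sum_congr rfl fun j _ => by rw [mul_pow]; ring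
end

section
open Polynomial
variable (ρ : SL →* (V5 ≃ₗ[ℂ] V5))

theorem classify (hρ : IsPolynomialRep ρ) (hirr : IsIrreducibleRep ρ) :
    ∃ Ψ : V5 ≃ₗ[ℂ] V5, ∀ (g : SL) w,
      Ψ (ρ g w) = S (g.1 0 0) (g.1 0 1) (g.1 1 0) (g.1 1 1) (Ψ w) := by
  classical
  obtain ⟨l, N, k, hl, hlo, hto⟩ := exists_borel ρ hρ
  obtain ⟨e, M, he⟩ := lin_poly Set.univ (fun t => l ∘ₗ (ρ (up t)).toLinearMap) (fun w => by
    obtain ⟨P, hP⟩ := poly_up ρ hρ l w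
    exact ⟨P, fun a _ => hP a⟩)
  replace he : ∀ t w, l (ρ (up t) w) = ∑ j ∈ Finset.range M, e j w * t ^ j :=
    fun t w => he t trivial w
  have hcell : ∀ (g : SL) (_ : g.1 0 0 ≠ 0) w, (g.1 0 0) ^ N * l (ρ g w) =
      (g.1 0 0) ^ k * l (ρ (up (g.1 0 1 / g.1 0 0)) w) := fun g h w => by
    have h1 : l (ρ g w) = l (ρ (tor (g.1 0 0) h) (ρ (up (g.1 0 1 / g.1 0 0)) w)) := by
      rw [← hlo (g.1 1 0 / g.1 0 0) (ρ (tor (g.1 0 0) h) _), ← rho_mul, ← rho_mul, mul_assoc, ← big_cell g h]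
    rw [h1, hto]
  have hinj : ∀ w, (∀ j < M, e j w = 0) → w = 0 := by
    intro w hw
    have h0 : ∀ t, l (ρ (up t) w) = 0 := fun t => by
      rw [he]; exact Finset.sum_eq_zero fun j hj => by rw [hw j (Finset.mem_range.1 hj), zero_mul]
    have h1 : ∀ g : SL, g.1 0 0 ≠ 0 → l (ρ g w) = 0 := fun g hg => by
      have := hcell g hg w
      rw [h0, mul_zero] at this
      exact (mul_eq_zero.1 this).resolve_left (pow_ne_zero _ hg)
    have h2 : ∀ g : SL, l (ρ g w) = 0 := fun g => by
      by_cases hg : g.1 0 0 = 0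
      · have hdet := det_eq g
        have hb : g.1 0 1 ≠ 0 := by
          intro hb; rw [hg, hb] at hdet; simp at hdet
        obtain ⟨P, hP⟩ := poly_lo ρ hρ (l ∘ₗ (ρ g).toLinearMap) w
        have hP0 : P = 0 := by
          apply Polynomial.eq_of_infinite_eval_eq
          apply Set.Infinite.mono (s := {a : ℂ | a ≠ 0})
          · intro a ha
            have h3 := hP a
            have h4 := h1 (g * lo a) (by
              rw [mul00, hg]; simpa [lo, sl] using ⟨hb, ha⟩)
            rw [rho_mul] at h4
            simp only [Set.mem_ofPred_eq, eval_zero]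
            rw [← h3]; exact h4
          · exact (Set.finite_singleton (0:ℂ)).infinite_compl
        have := hP 0
        rw [hP0, lo_zero, rho_one] at this
        simpa using this
      · exact h1 g hg
    let U : Submodule ℂ V5 :=
      { carrier := {w | ∀ g : SL, l (ρ g w) = 0}
        add_mem' := fun {a b} ha hb g => by rw [map_add, map_add, ha g, hb g, add_zero]
        zero_mem' := fun g => by simp
        smul_mem' := fun r a ha g => by rw [map_smul, map_smul, ha g, smul_zero] }
    have hU : ∀ g : SL, ∀ w ∈ U, ρ g w ∈ U := fun g w hw h => by
      rw [← rho_mul]; exact hw _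
    have hwU : w ∈ U := h2
    rcases hirr U hU with h | h
    · rw [h] at hwU; simpa using hwU
    · exfalso; apply hl
      ext1 i; ext
      have : (Pi.single i 1 : V5) ∈ U := by rw [h]; trivial
      have := this 1
      rw [rho_one] at this
      simpa using this
  obtain ⟨d, hdM, hd, hmax⟩ := truncate M e (by
    by_contra! hall
    have := hinj (Pi.single 0 1) (fun j hj => by rw [hall j hj]; rfl)
    simpa using congrFun this 0)
  have hscale : ∀ a (ha : a ≠ 0) w, ∀ j < M,
      a ^ N * e j (ρ (tor a ha) w) = a ^ k * ((a⁻¹)^2)^j * e j w := by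
    intro a ha w j hj
    refine coeff_unique M (fun j => a ^ N * e j (ρ (tor a ha) w))
      (fun j => a ^ k * ((a⁻¹)^2)^j * e j w) (fun t _ => ?_) j hj
    have h1 := hto a ha (ρ (up (t * (a⁻¹)^2)) w)
    rw [← rho_mul, ← up_to, rho_mul, he, he] at h1
    simp only [mul_assoc, ← Finset.mul_sum]
    rw [h1]
    congr 1
    exact Finset.sum_congr rfl fun j _ => by rw [mul_pow]; ring
  have htrans : ∀ s w, ∀ j < M, e j (ρ (up s) w) =
      ∑ i ∈ Finset.range M, e i w * (s ^ (i - j) * (i.choose j : ℂ)) := by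
    intro s w j hj
    refine coeff_unique M (fun j => e j (ρ (up s) w))
      (fun j => ∑ i ∈ Finset.range M, e i w * (s ^ (i - j) * (i.choose j : ℂ))) (fun t _ => ?_) j hj
    rw [← translate M (fun i => e i w), ← he, ← he, up_add, rho_mul]
  have hne : ∀ j ≤ d, e j ≠ 0 := by
    intro j hj h0
    obtain ⟨w, hw⟩ : ∃ w, e d w ≠ 0 := by
      by_contra! h; exact hd (LinearMap.ext h)
    have hP : (∑ i ∈ Finset.range M, C (e i w * (i.choose j : ℂ)) * X ^ i : ℂ[X]) = 0 := by
      apply Polynomial.funext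
      intro s
      have := htrans s w j (lt_of_le_of_lt hj hdM)
      rw [h0] at this
      simp only [eval_finsetSum, eval_mul, eval_C, eval_pow, eval_X, eval_zero]
      rw [LinearMap.zero_apply] at this
      calc _ = s ^ j * ∑ i ∈ Finset.range M, e i w * (s ^ (i - j) * (i.choose j : ℂ)) := by
            rw [Finset.mul_sum]
            refine Finset.sum_congr rfl fun i _ => ?_
            rcases lt_or_ge i j with h | h
            · rw [Nat.choose_eq_zero_of_lt h]; simp
            · conv_lhs => rw [← Nat.sub_add_cancel h, pow_add]
              rw [Nat.sub_add_cancel h]; ring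
        _ = 0 := by rw [← this, mul_zero]
    have := congrArg (fun p => p.coeff d) hP
    simp only [finsetSum_coeff, coeff_C_mul, coeff_X_pow, coeff_zero, mul_ite, mul_one, mul_zero,
      Finset.sum_ite_eq, Finset.mem_range, hdM, if_true, mul_eq_zero, hw, false_or,
      Nat.cast_eq_zero] at this
    exact absurd this (Nat.choose_pos hj).ne'
  have hind : LinearIndependent ℂ (fun j : Fin (d + 1) => e j) := by
    rw [Fintype.linearIndependent_iff]
    intro α hα j
    by_contra hαj
    obtain ⟨w, hw⟩ : ∃ w, e j w ≠ 0 := by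
      by_contra! h; exact hne j (Nat.lt_succ_iff.1 j.2) (LinearMap.ext h)
    have hs : ∀ b : ℂ, b ≠ 0 → ∑ i : Fin (d+1), α i * e i w * (b^2)^(i:ℕ) = 0 := by
      intro b hb
      have h1 := congrArg (fun f => f (ρ (tor b⁻¹ (inv_ne_zero hb)) w)) hα
      simp only [LinearMap.sum_apply, LinearMap.smul_apply, smul_eq_mul, LinearMap.zero_apply] at h1
      have h2 : (b⁻¹)^N * ∑ i : Fin (d+1), α i * e i (ρ (tor b⁻¹ (inv_ne_zero hb)) w) =
          (b⁻¹)^k * ∑ i : Fin (d+1), α i * e i w * (b^2)^(i:ℕ) := by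
        rw [Finset.mul_sum, Finset.mul_sum]
        refine Finset.sum_congr rfl fun i _ => ?_
        have := hscale b⁻¹ (inv_ne_zero hb) w i (lt_of_lt_of_le i.2 hdM)
        rw [inv_inv] at this
        linear_combination α i * this
      rw [h1, mul_zero] at h2
      exact (mul_eq_zero.1 h2.symm).resolve_left (pow_ne_zero _ (inv_ne_zero hb))
    have hP : (∑ i : Fin (d+1), C (α i * e i w) * (X ^ 2) ^ (i:ℕ) : ℂ[X]) = 0 := by
      apply Polynomial.eq_of_infinite_eval_eq
      apply Set.Infinite.mono (s := {a : ℂ | a ≠ 0})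
      · intro b hb
        simpa [eval_finsetSum] using hs b hb
      · exact (Set.finite_singleton (0:ℂ)).infinite_compl
    have := congrArg (fun p => p.coeff (2 * (j:ℕ))) hP
    simp only [finsetSum_coeff, ← pow_mul, coeff_C_mul, coeff_X_pow, coeff_zero] at this
    rw [Finset.sum_eq_single j] at this
    · simp [hαj, hw] at this
    · intro i _ hij
      rw [if_neg, mul_zero]
      intro h; exact hij (Fin.ext (by omega))
    · simp
  have hΨinj : Function.Injective (LinearMap.pi (fun j : Fin (d + 1) => e j)) := by
    rw [← LinearMap.ker_eq_bot, LinearMap.ker_eq_bot']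
    intro w hw
    apply hinj
    intro j hj
    rcases Nat.lt_or_ge d j with h | h
    · rw [hmax j hj h]; rfl
    · exact congrFun hw ⟨j, Nat.lt_succ_of_le h⟩
  have hd4 : d = 4 := by
    have h1 := LinearMap.finrank_le_finrank_of_injective hΨinj
    have h2 := hind.fintype_card_le_finrank
    have h3 : Module.finrank ℂ (V5 →ₗ[ℂ] ℂ) = 5 := by
      rw [show Module.finrank ℂ (V5 →ₗ[ℂ] ℂ) = Module.finrank ℂ V5 from Subspace.dual_finrank_eq]
      simp
    rw [h3] at h2
    simp at h1 h2
    omega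
  subst hd4
  let Ψ : V5 ≃ₗ[ℂ] V5 := LinearEquiv.ofInjectiveEndo _ hΨinj
  have hΨ : ∀ w (j : Fin 5), Ψ w j = e j w := fun w j => rfl
  have hev : ∀ t w, l (ρ (up t) w) = ev (Ψ w) 1 t := by
    intro t w
    rw [he, ← Finset.sum_subset (Finset.range_subset_range.2 (show 5 ≤ M from hdM))]
    · simp [Finset.sum_range_succ, ev, hΨ]
    · intro j hj hj'
      rw [hmax j (Finset.mem_range.1 hj) (by
        rw [Finset.mem_range] at hj'; omega)]; simp
  have hk : k = N + 4 := by
    let w0 : SL := sl 0 1 (-1) 0 (by ring)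
    have hw0 : ∀ t : ℂ, t ≠ 0 → ∀ w, (-t) ^ N * ev (Ψ (ρ w0 w)) 1 t =
        (-t) ^ k * ev (Ψ w) 1 (-t⁻¹) := by
      intro t ht w
      have h00 : (up t * w0).1 0 0 = -t := by rw [mul00]; simp [up, w0, sl]
      have h01 : (up t * w0).1 0 1 = 1 := by rw [mul01]; simp [up, w0, sl]
      have := hcell (up t * w0) (by rw [h00]; simpa using ht) w
      rw [rho_mul, hev, hev, h00, h01] at this
      rw [this]; congr 2; field_simp
    let B : V5 → ℂ[X] := fun v => C (v 0) + C (v 1) * X + C (v 2) * X ^ 2 + C (v 3) * X ^ 3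
      + C (v 4) * X ^ 4
    have hB : ∀ v t, (B v).eval t = ev v 1 t := fun v t => by simp [B, ev]
    have hBdeg : ∀ v, (B v).natDegree ≤ 4 := fun v => by
      simp only [B]; compute_degree
    have inf : ({a : ℂ | a ≠ 0}).Infinite := (Set.finite_singleton (0:ℂ)).infinite_compl
    have key : ∀ (n : ℕ) (b : ℂ[X]), (-X) ^ n * b = (-X) ^ k → k = n + b.natDegree := by
      intro n b h
      have hb : b ≠ 0 := by
        rintro rfl; rw [mul_zero] at h
        exact pow_ne_zero k (neg_ne_zero.2 (X_ne_zero (R := ℂ))) h.symm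
      have h1 := congrArg natDegree h
      rw [natDegree_mul (pow_ne_zero _ (neg_ne_zero.2 X_ne_zero)) hb, natDegree_pow, natDegree_pow,
        natDegree_neg, natDegree_X] at h1
      omega
    have a0 := key N (B (Ψ (ρ w0 (Ψ.symm (Pi.single 0 1))))) (by
      apply Polynomial.eq_of_infinite_eval_eq
      refine inf.mono fun t ht => ?_
      have := hw0 t ht (Ψ.symm (Pi.single 0 1))
      rw [Ψ.apply_symm_apply] at this
      simp only [Set.mem_ofPred_eq, eval_mul, hB, eval_pow, eval_neg, eval_X]
      rw [this]; simp [ev])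
    have a4 := key (N + 4) (B (Ψ (ρ w0 (Ψ.symm (Pi.single 4 1))))) (by
      apply Polynomial.eq_of_infinite_eval_eq
      refine inf.mono fun t ht => ?_
      have := hw0 t ht (Ψ.symm (Pi.single 4 1))
      rw [Ψ.apply_symm_apply] at this
      simp only [Set.mem_ofPred_eq, eval_mul, hB, eval_pow, eval_neg, eval_X]
      rw [pow_add, mul_right_comm, this]
      have ht' : t ≠ 0 := ht
      simp [ev]; field_simp)
    have := hBdeg (Ψ (ρ w0 (Ψ.symm (Pi.single 0 1))))
    omega
  have hform : ∀ (g : SL) (_ : g.1 0 0 ≠ 0) w, l (ρ g w) = ev (Ψ w) (g.1 0 0) (g.1 0 1) := by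
    intro g hg w
    have := hcell g hg w
    rw [hk, pow_add, mul_assoc] at this
    rw [mul_left_cancel₀ (pow_ne_zero _ hg) this, hev]
    simp only [ev]; field_simp
  refine ⟨Ψ, fun h w => ?_⟩
  apply ev_inj
  have gen : ∀ t, h.1 0 0 + t * h.1 1 0 ≠ 0 → ev (Ψ (ρ h w)) 1 t =
      ev (S (h.1 0 0) (h.1 0 1) (h.1 1 0) (h.1 1 1) (Ψ w)) 1 t := by
    intro t ht
    have h00 : (up t * h).1 0 0 = h.1 0 0 + t * h.1 1 0 := by rw [mul00]; simp [up, sl]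
    have h01 : (up t * h).1 0 1 = h.1 0 1 + t * h.1 1 1 := by rw [mul01]; simp [up, sl]
    rw [← hev, ← rho_mul, hform _ (by rw [h00]; exact ht), h00, h01, ev_S]
    congr 1 <;> ring
  let B : V5 → ℂ[X] := fun v => C (v 0) + C (v 1) * X + C (v 2) * X ^ 2 + C (v 3) * X ^ 3
      + C (v 4) * X ^ 4
  have hB : ∀ v t, (B v).eval t = ev v 1 t := fun v t => by simp [B, ev]
  have hz : (B (Ψ (ρ h w)) - B (S (h.1 0 0) (h.1 0 1) (h.1 1 0) (h.1 1 1) (Ψ w))) *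
      (C (h.1 0 0) + X * C (h.1 1 0)) = 0 := by
    apply Polynomial.funext
    intro t
    simp only [eval_mul, eval_sub, hB, eval_add, eval_C, eval_X, eval_zero]
    by_cases ht : h.1 0 0 + t * h.1 1 0 = 0
    · rw [ht, mul_zero]
    · rw [gen t ht, sub_self, zero_mul]
  have hnz : (C (h.1 0 0) + X * C (h.1 1 0) : ℂ[X]) ≠ 0 := by
    intro h0
    have c0 := congrArg (fun p => p.coeff 0) h0
    have c1 := congrArg (fun p => p.coeff 1) h0
    simp at c0 c1
    have := det_eq h
    rw [c0, c1] at this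
    simp at this
  have := sub_eq_zero.1 ((mul_eq_zero.1 hz).resolve_right hnz)
  intro t
  rw [← hB, ← hB, this]
end

lemma polyFun_coord (Ψ : V5 ≃ₗ[ℂ] V5) (i : Fin 5) : IsPolyFun (fun v => Ψ v i) :=
  Algebra.subset_adjoin ⟨LinearMap.proj i ∘ₗ Ψ.toLinearMap, rfl⟩

lemma polyFun_I (Ψ : V5 ≃ₗ[ℂ] V5) : IsPolyFun (fun v => Iq (Ψ v)) := by
  let A := Algebra.adjoin ℂ (Set.range fun l : V5 →ₗ[ℂ] ℂ => (l : V5 → ℂ))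
  have hc : ∀ i, (fun v => Ψ v i) ∈ A := polyFun_coord Ψ
  have hn : ∀ n : ℂ, (fun _ : V5 => n) ∈ A := fun n => A.algebraMap_mem n
  exact A.add_mem (A.sub_mem (A.mul_mem (A.mul_mem (hn 12) (hc 0)) (hc 4))
    (A.mul_mem (A.mul_mem (hn 3) (hc 1)) (hc 3))) (A.mul_mem (hc 2) (hc 2))

lemma polyFun_J (Ψ : V5 ≃ₗ[ℂ] V5) : IsPolyFun (fun v => Jq (Ψ v)) := by
  let A := Algebra.adjoin ℂ (Set.range fun l : V5 →ₗ[ℂ] ℂ => (l : V5 → ℂ))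
  have hc : ∀ i, (fun v => Ψ v i) ∈ A := polyFun_coord Ψ
  have hn : ∀ n : ℂ, (fun _ : V5 => n) ∈ A := fun n => A.algebraMap_mem n
  have h3 : ∀ n i j k, (fun v => n * Ψ v i * Ψ v j * Ψ v k) ∈ A := fun n i j k =>
    A.mul_mem (A.mul_mem (A.mul_mem (hn n) (hc i)) (hc j)) (hc k)
  exact A.sub_mem (A.sub_mem (A.sub_mem (A.add_mem (h3 72 0 2 4) (h3 9 1 2 3)) (h3 27 0 3 3))
    (h3 27 4 1 1)) (h3 2 2 2 2)

/-- Let `G = SO₃(ℂ)` act on `V = R₄ = Sym⁴(ℂ²)`, the 5-dimensional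
irreducible representation of `SL₂(ℂ)` (which factors through `SO₃`, realized as any
polynomial irreducible representation of `SL₂` on `ℂ⁵`, whose image is then the image
of `SO₃`).  Then `G' = G`: every element of `GL(V)` preserving all `G`-invariant
polynomials lies in the image of `SO₃`. -/
theorem stmt18
    (ρ : Matrix.SpecialLinearGroup (Fin 2) ℂ →* ((Fin 5 → ℂ) ≃ₗ[ℂ] (Fin 5 → ℂ)))
    (hρpoly : IsPolynomialRep ρ) (hρirr : IsIrreducibleRep ρ)
    (hcenter : ρ (-1) = 1) :
    primeGroup ρ.range = ρ.range := by
  obtain ⟨Ψ, hΨ⟩ := classify ρ hρpoly hρirr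
  apply le_antisymm
  · intro φ hφ
    have hI := hφ _ (polyFun_I Ψ) (by
      rintro _ ⟨g, rfl⟩ v
      change Iq (Ψ (ρ g v)) = Iq (Ψ v)
      rw [hΨ, Iq_S _ _ _ _ (det_eq g)])
    have hJ := hφ _ (polyFun_J Ψ) (by
      rintro _ ⟨g, rfl⟩ v
      change Jq (Ψ (ρ g v)) = Jq (Ψ v)
      rw [hΨ, Jq_S _ _ _ _ (det_eq g)])
    beta_reduce at hI hJ
    obtain ⟨a, b, c, d, hdet, hS⟩ := step2 (Ψ.symm.trans (φ.trans Ψ))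
      (fun v => by simp [hI]) (fun v => by simp [hJ])
    refine ⟨sl a b c d hdet, ?_⟩
    apply LinearEquiv.ext
    intro v
    apply Ψ.injective
    have := hS (Ψ v)
    simp only [LinearEquiv.trans_apply, LinearEquiv.symm_apply_apply] at this
    rw [hΨ, this]
    simp [sl]
  · rintro _ ⟨g, rfl⟩ f _ hf v
    exact hf _ ⟨g, rfl⟩ v

end Stmt18
end
end

section
/- Let G = SO₃(ℂ) act on V = R₄, its 5-dimensional irreducible representation. Then the Lie algebra of G' equals the image of the Lie algebra so₃ (equivalently sl₂) acting on V; in particular the Lie algebra of G' is semisimple with trivial center. -/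
noncomputable section

namespace Stmt19

/-- A representation of `SL₂(ℂ)` is polynomial (algebraic) if all its matrix
coefficients are polynomial functions of the matrix entries. -/
def IsPolynomialRep {W : Type} [AddCommGroup W] [Module ℂ W]
    (ρ : Matrix.SpecialLinearGroup (Fin 2) ℂ →* (W ≃ₗ[ℂ] W)) : Prop :=
  ∀ (l : W →ₗ[ℂ] ℂ) (w : W), ∃ p : MvPolynomial (Fin 2 × Fin 2) ℂ,
    ∀ g : Matrix.SpecialLinearGroup (Fin 2) ℂ,
      l (ρ g w) = MvPolynomial.eval (fun ij => (g : Matrix (Fin 2) (Fin 2) ℂ) ij.1 ij.2) p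

/-- Irreducibility of a representation. -/
def IsIrreducibleRep {W : Type} [AddCommGroup W] [Module ℂ W]
    (ρ : Matrix.SpecialLinearGroup (Fin 2) ℂ →* (W ≃ₗ[ℂ] W)) : Prop :=
  ∀ U : Submodule ℂ W, (∀ g : Matrix.SpecialLinearGroup (Fin 2) ℂ, ∀ w ∈ U, ρ g w ∈ U) →
    U = ⊥ ∨ U = ⊤

/-- The Lie algebra of a (closed) subgroup `H ⊆ GL(ℂ⁵)`: all endomorphisms arising as
derivatives at `0` of differentiable curves through the identity inside `H`. -/
def lieAlgebraOf (H : Subgroup ((Fin 5 → ℂ) ≃ₗ[ℂ] (Fin 5 → ℂ))) :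
    Set (Module.End ℂ (Fin 5 → ℂ)) :=
  {A | ∃ c : ℂ → ((Fin 5 → ℂ) ≃ₗ[ℂ] (Fin 5 → ℂ)), c 0 = 1 ∧ (∀ s : ℂ, c s ∈ H) ∧
    ∀ v : Fin 5 → ℂ, HasDerivAt (fun s : ℂ => c s v) (A v) 0}


open Matrix

lemma hasDerivAt_mvpoly {σ : Type} [Fintype σ] (p : MvPolynomial σ ℂ) (x : ℂ → σ → ℂ) (x' : σ → ℂ) (t : ℂ)
    (hx : ∀ i, HasDerivAt (fun s => x s i) (x' i) t) :
    HasDerivAt (fun s => MvPolynomial.eval (x s) p)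
      (∑ i, x' i * MvPolynomial.eval (x t) (MvPolynomial.pderiv i p)) t := by
  classical
  induction p using MvPolynomial.induction_on with
  | C a => simpa using hasDerivAt_const t a
  | add p q hp hq =>
    have := hp.add hq
    simp only [map_add, mul_add, Finset.sum_add_distrib]
    exact this
  | mul_X p i hp =>
    have := hp.mul (hx i)
    simp only [map_mul, MvPolynomial.eval_X]
    refine this.congr_deriv ?_
    simp only [Derivation.leibniz, smul_eq_mul, map_add, map_mul, MvPolynomial.eval_X,
      MvPolynomial.pderiv_X, mul_add, Finset.sum_add_distrib]
    rw [add_comm]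
    congr 1
    · rw [Finset.sum_eq_single i]
      · simp; ring
      · intro b _ hb; simp [Ne.symm hb]
      · simp
    · rw [Finset.sum_mul]; refine Finset.sum_congr rfl fun j _ => by ring

abbrev SL2 := Matrix.SpecialLinearGroup (Fin 2) ℂ
abbrev M2 := Matrix (Fin 2) (Fin 2) ℂ
abbrev V5 := Fin 5 → ℂ

/-- a curve with given tangent vector -/
lemma exists_curve (X : M2) (hX : X 0 0 + X 1 1 = 0) : ∃ γ : ℂ → SL2, γ 0 = 1 ∧
    ∀ i j, HasDerivAt (fun s => (γ s : M2) i j) (X i j) 0 := by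
  have hd : ∀ s : ℂ, (!![Complex.exp (s * X 0 0) + s * X 0 1 * (s * X 1 0) * Complex.exp (-(s * X 0 0)), s * X 0 1 * Complex.exp (-(s * X 0 0));
      s * X 1 0 * Complex.exp (-(s * X 0 0)), Complex.exp (-(s * X 0 0))] : M2).det = 1 := by
    intro s
    have : Complex.exp (s * X 0 0) * Complex.exp (-(s * X 0 0)) = 1 := by
      rw [← Complex.exp_add]; simp
    rw [Matrix.det_fin_two_of]
    linear_combination this
  have he : ∀ a : ℂ, HasDerivAt (fun s : ℂ => Complex.exp (s * a)) a 0 := by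
    intro a
    have := ((hasDerivAt_id (0:ℂ)).mul_const a).cexp
    simpa using this
  have he' : HasDerivAt (fun s : ℂ => Complex.exp (-(s * X 0 0))) (-X 0 0) 0 := by
    have := he (-X 0 0)
    simpa using this
  have hl : ∀ a : ℂ, HasDerivAt (fun s : ℂ => s * a) a 0 := fun a => by
    simpa using (hasDerivAt_id (0:ℂ)).mul_const a
  refine ⟨fun s => ⟨_, hd s⟩, ?_, ?_⟩
  · ext i j; fin_cases i <;> fin_cases j <;> simp
  · intro i j
    fin_cases i <;> fin_cases j
    · simpa using (he (X 0 0)).fun_add (((hl (X 0 1)).fun_mul (hl (X 1 0))).fun_mul he')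
    · simpa using (hl (X 0 1)).fun_mul he'
    · simpa using (hl (X 1 0)).fun_mul he'
    · refine he'.congr_deriv ?_
      simp; linear_combination -hX

/-- The differential. -/
lemma exists_diff (ρ : SL2 →* (V5 ≃ₗ[ℂ] V5)) (hρpoly : IsPolynomialRep ρ) :
    ∃ D : M2 →ₗ[ℂ] Module.End ℂ V5, ∀ (γ : ℂ → SL2) (X : M2), γ 0 = 1 →
      (∀ i j, HasDerivAt (fun s => (γ s : M2) i j) (X i j) 0) →
      ∀ v, HasDerivAt (fun s => ρ (γ s) v) (D X v) 0 := by
  classical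
  choose P hP using fun i j : Fin 5 => hρpoly (LinearMap.proj i) (Pi.single j 1)
  let N : (Fin 2 × Fin 2) → Matrix (Fin 5) (Fin 5) ℂ := fun ab => Matrix.of fun i j =>
    MvPolynomial.eval (fun ij : Fin 2 × Fin 2 => (1 : M2) ij.1 ij.2) (MvPolynomial.pderiv ab (P i j))
  refine ⟨∑ ab, LinearMap.smulRight (Matrix.entryLinearMap ℂ ℂ ab.1 ab.2) (Matrix.toLin' (N ab)), ?_⟩
  intro γ X h0 hγ v
  have key : ∀ g v i, ρ g v i = ∑ j, MvPolynomial.eval (fun ij => (g : M2) ij.1 ij.2) (P i j) * v j := by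
    intro g v i
    conv_lhs => rw [← Finset.univ_sum_single v]
    rw [map_sum, Finset.sum_apply]
    refine Finset.sum_congr rfl fun j _ => ?_
    rw [← hP]
    have : (Pi.single j (v j) : V5) = v j • Pi.single j 1 := by
      rw [← Pi.single_smul]; simp
    rw [this, map_smul]; simp [mul_comm]
  rw [hasDerivAt_pi]
  intro i
  simp only [key]
  have := HasDerivAt.fun_sum (u := Finset.univ) fun j _ =>
    (hasDerivAt_mvpoly (P i j) (fun s ij => (γ s : M2) ij.1 ij.2) (fun ij => X ij.1 ij.2) 0
      (fun ij => hγ ij.1 ij.2)).mul_const (v j)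
  refine this.congr_deriv ?_
  simp only [h0, LinearMap.sum_apply, LinearMap.smulRight_apply, LinearMap.smul_apply, Finset.sum_apply,
    Matrix.toLin'_apply, Matrix.mulVec, dotProduct, Pi.smul_apply, smul_eq_mul, N, Matrix.of_apply,
    Finset.sum_mul, Finset.mul_sum, Matrix.entryLinearMap_apply]
  rw [Finset.sum_comm]
  refine Finset.sum_congr rfl fun _ _ => Finset.sum_congr rfl fun _ _ => ?_
  simp [mul_assoc]

lemma hasDerivAt_matmul {A B : ℂ → M2} {A' B' : M2} {t : ℂ}
    (hA : ∀ i j, HasDerivAt (fun s => A s i j) (A' i j) t)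
    (hB : ∀ i j, HasDerivAt (fun s => B s i j) (B' i j) t) (i j : Fin 2) :
    HasDerivAt (fun s => (A s * B s) i j) ((A' * B t + A t * B') i j) t := by
  simp only [Matrix.mul_apply, Matrix.add_apply, Fin.sum_univ_two]
  refine (((hA i 0).fun_mul (hB 0 j)).fun_add ((hA i 1).fun_mul (hB 1 j))).congr_deriv ?_
  ring

lemma hasDerivAt_linear (L : V5 →ₗ[ℂ] V5) {u : ℂ → V5} {u' : V5} {t : ℂ} (h : HasDerivAt u u' t) :
    HasDerivAt (fun s => L (u s)) (L u') t :=
  (LinearMap.toContinuousLinearMap L).hasFDerivAt.comp_hasDerivAt t h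

/-- `D` is the differential of `ρ` at the identity. -/
def IsDiff (ρ : SL2 →* (V5 ≃ₗ[ℂ] V5)) (D : M2 →ₗ[ℂ] Module.End ℂ V5) : Prop :=
  ∀ (γ : ℂ → SL2) (X : M2), γ 0 = 1 →
      (∀ i j, HasDerivAt (fun s => (γ s : M2) i j) (X i j) 0) →
      ∀ v, HasDerivAt (fun s => ρ (γ s) v) (D X v) 0

lemma IsDiff.conj {ρ : SL2 →* (V5 ≃ₗ[ℂ] V5)} {D : M2 →ₗ[ℂ] Module.End ℂ V5} (hD : IsDiff ρ D)
    (g : SL2) (X : M2) (hX : X 0 0 + X 1 1 = 0) (v : V5) :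
    ρ g (D X v) = D ((g : M2) * X * ((g⁻¹ : SL2) : M2)) (ρ g v) := by
  obtain ⟨γ, h0, hγ⟩ := exists_curve X hX
  have h1 := hasDerivAt_linear (ρ g : V5 →ₗ[ℂ] V5) (hD γ X h0 hγ v)
  have h2 := hD (fun s => g * γ s * g⁻¹) ((g : M2) * X * ((g⁻¹ : SL2) : M2)) (by simp [h0]) (by
    intro i j
    have := hasDerivAt_matmul (hasDerivAt_matmul (A := fun _ => (g : M2)) (A' := 0) (t := 0)
      (fun i j => hasDerivAt_const _ _) hγ) (B := fun _ => ((g⁻¹ : SL2) : M2)) (B' := 0)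
      (fun i j => hasDerivAt_const _ _) i j
    simp only [Matrix.SpecialLinearGroup.coe_mul]
    refine this.congr_deriv ?_
    simp) (ρ g v)
  refine h1.unique (h2.congr_of_eventuallyEq (Filter.Eventually.of_forall fun s => ?_))
  change ρ g (ρ (γ s) v) = ρ (g * γ s * g⁻¹) (ρ g v)
  simp only [← LinearEquiv.mul_apply, ← map_mul]
  simp

lemma hasDerivAt_D (D : M2 →ₗ[ℂ] Module.End ℂ V5) {Z : ℂ → M2} {Z' : M2} {u : ℂ → V5} {u' : V5} {t : ℂ}
    (hZ : ∀ i j, HasDerivAt (fun s => Z s i j) (Z' i j) t) (hu : HasDerivAt u u' t) :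
    HasDerivAt (fun s => D (Z s) (u s)) (D Z' (u t) + D (Z t) u') t := by
  have key : ∀ (A : M2) w, D A w = ∑ i, ∑ j, A i j • D (Matrix.single i j 1) w := by
    intro A w
    conv_lhs => rw [Matrix.matrix_eq_sum_single A]
    simp only [map_sum, LinearMap.sum_apply]
    refine Finset.sum_congr rfl fun i _ => Finset.sum_congr rfl fun j _ => ?_
    rw [← LinearMap.smul_apply, ← map_smul, Matrix.smul_single]; simp
  rw [show (fun s => D (Z s) (u s)) = fun s => ∑ i, ∑ j, Z s i j • D (Matrix.single i j 1) (u s) from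
    funext fun s => key _ _]
  have := HasDerivAt.fun_sum (u := Finset.univ) fun i _ => HasDerivAt.fun_sum (u := Finset.univ) fun j _ =>
    (hZ i j).fun_smul (hasDerivAt_linear (D (Matrix.single i j 1)) hu)
  refine this.congr_deriv ?_
  rw [key Z', key (Z t)]
  have aux : ∀ {M : Type} [AddCommMonoid M] (f g : Fin 2 → Fin 2 → M),
      ∑ i, ∑ j, (f i j + g i j) = ∑ i, ∑ j, g i j + ∑ i, ∑ j, f i j := by
    intro M _ f g
    simp only [Finset.sum_add_distrib]
    rw [add_comm]
  exact aux _ _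

lemma IsDiff.lie {ρ : SL2 →* (V5 ≃ₗ[ℂ] V5)} {D : M2 →ₗ[ℂ] Module.End ℂ V5} (hD : IsDiff ρ D)
    (X Y : M2) (hX : X 0 0 + X 1 1 = 0) (hY : Y 0 0 + Y 1 1 = 0) :
    D Y * D X - D X * D Y = D (Y * X - X * Y) := by
  obtain ⟨γ, h0, hγ⟩ := exists_curve Y hY
  have hinv : ∀ i j, HasDerivAt (fun s => (((γ s)⁻¹ : SL2) : M2) i j) ((-Y) i j) 0 := by
    intro i j
    simp only [Matrix.SpecialLinearGroup.coe_inv, Matrix.adjugate_fin_two]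
    fin_cases i <;> fin_cases j <;> simp
    · exact (hγ 1 1).congr_deriv (by linear_combination hY)
    · exact (hγ 0 1).fun_neg
    · exact (hγ 1 0).fun_neg
    · exact (hγ 0 0).congr_deriv (by linear_combination hY)
  have hZ := hasDerivAt_matmul (hasDerivAt_matmul hγ (B := fun _ => X) (B' := 0)
      (fun i j => hasDerivAt_const _ _)) hinv
  refine LinearMap.ext fun v => ?_
  have h1 := hD γ Y h0 hγ (D X v)
  have h2 := hasDerivAt_D D hZ (hD γ Y h0 hγ v)
  simp only [← hD.conj _ X hX] at h2
  have := h1.unique h2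
  simp [h0] at this
  simp only [LinearMap.sub_apply, Module.End.mul_apply, this, map_sub]
  simp [sub_eq_add_neg]

/-- Upper unipotent. -/
def up (s : ℂ) : SL2 := ⟨!![1, s; 0, 1], by simp [Matrix.det_fin_two_of]⟩
/-- Lower unipotent. -/
def lo (s : ℂ) : SL2 := ⟨!![1, 0; s, 1], by simp [Matrix.det_fin_two_of]⟩

lemma up_coe (s : ℂ) : (up s : M2) = !![1, s; 0, 1] := rfl
lemma lo_coe (s : ℂ) : (lo s : M2) = !![1, 0; s, 1] := rfl

lemma gen_SL2 (K : Subgroup SL2) (hu : ∀ s, up s ∈ K) (hl : ∀ s, lo s ∈ K) (g : SL2) : g ∈ K := by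
  have main : ∀ g : SL2, (g : M2) 1 0 ≠ 0 → g ∈ K := by
    intro g hc
    have hdet := g.det_coe
    rw [Matrix.det_fin_two] at hdet
    have : g = up (((g : M2) 0 0 - 1) / (g : M2) 1 0) * lo ((g : M2) 1 0) * up (((g : M2) 1 1 - 1) / (g : M2) 1 0) := by
      ext i j
      fin_cases i <;> fin_cases j <;> simp [up_coe, lo_coe, Matrix.SpecialLinearGroup.coe_mul, Matrix.mul_apply, Fin.sum_univ_two] <;> field_simp <;> grind
    rw [this]
    exact K.mul_mem (K.mul_mem (hu _) (hl _)) (hu _)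
  by_cases hc : (g : M2) 1 0 = 0
  · have hd : (g : M2) 1 1 ≠ 0 := by
      intro h
      have hdet := g.det_coe
      rw [Matrix.det_fin_two] at hdet
      simp [h, hc] at hdet
    have := main (g * lo 1) (by simp [lo_coe, Matrix.SpecialLinearGroup.coe_mul, Matrix.mul_apply, Fin.sum_univ_two, hc, hd])
    simpa using K.mul_mem this (K.inv_mem (hl 1))
  · exact main g hc

lemma IsDiff.up {ρ : SL2 →* (V5 ≃ₗ[ℂ] V5)} {D : M2 →ₗ[ℂ] Module.End ℂ V5} (hD : IsDiff ρ D)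
    (v : V5) (t : ℂ) : HasDerivAt (fun s => ρ (up s) v) (D !![0, 1; 0, 0] (ρ (up t) v)) t := by
  have h := hD Stmt19.up !![0, 1; 0, 0] (by ext i j; fin_cases i <;> fin_cases j <;> simp [Stmt19.up_coe]) (by
    intro i j
    fin_cases i <;> fin_cases j <;> simp [Stmt19.up_coe, hasDerivAt_const, hasDerivAt_id']) (ρ (Stmt19.up t) v)
  have h2 := HasDerivAt.comp_sub_const t t (by simpa using h)
  refine h2.congr_of_eventuallyEq (Filter.Eventually.of_forall fun s => ?_)
  simp only [← LinearEquiv.mul_apply, ← map_mul]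
  congr 2
  ext i j; fin_cases i <;> fin_cases j <;> simp [Stmt19.up_coe, Matrix.SpecialLinearGroup.coe_mul]

lemma IsDiff.lo {ρ : SL2 →* (V5 ≃ₗ[ℂ] V5)} {D : M2 →ₗ[ℂ] Module.End ℂ V5} (hD : IsDiff ρ D)
    (v : V5) (t : ℂ) : HasDerivAt (fun s => ρ (lo s) v) (D !![0, 0; 1, 0] (ρ (lo t) v)) t := by
  have h := hD Stmt19.lo !![0, 0; 1, 0] (by ext i j; fin_cases i <;> fin_cases j <;> simp [Stmt19.lo_coe]) (by
    intro i j
    fin_cases i <;> fin_cases j <;> simp [Stmt19.lo_coe, hasDerivAt_const, hasDerivAt_id']) (ρ (Stmt19.lo t) v)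
  have h2 := HasDerivAt.comp_sub_const t t (by simpa using h)
  refine h2.congr_of_eventuallyEq (Filter.Eventually.of_forall fun s => ?_)
  simp only [← LinearEquiv.mul_apply, ← map_mul]
  congr 2
  ext i j; fin_cases i <;> fin_cases j <;> simp [Stmt19.lo_coe, Matrix.SpecialLinearGroup.coe_mul]

lemma ode_mem (E : V5 →ₗ[ℂ] V5) (W : Submodule ℂ V5) (hW : ∀ w ∈ W, E w ∈ W) (u : ℂ → V5)
    (h0 : u 0 ∈ W) (hu : ∀ t, HasDerivAt u (E (u t)) t) (s : ℂ) : u s ∈ W := by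
  let _ : NormedAlgebra ℚ (V5 →L[ℂ] V5) := NormedAlgebra.restrictScalars ℚ ℂ _
  let E' : V5 →L[ℂ] V5 := LinearMap.toContinuousLinearMap E
  have hd : ∀ t, HasDerivAt (fun t => NormedSpace.exp (t • (-E')) (u t)) 0 t := by
    intro t
    have := (hasDerivAt_exp_smul_const (𝕂 := ℂ) (-E') t).clm_apply (hu t)
    refine this.congr_deriv ?_
    simp [E']
  have hc := is_const_of_deriv_eq_zero (fun t => (hd t).differentiableAt) (fun t => (hd t).deriv) s 0
  have hc : NormedSpace.exp (s • (-E')) (u s) = u 0 := by simpa using hc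
  have hs : u s = NormedSpace.exp (s • E') (u 0) := by
    rw [← hc, ← mul_apply_eq_comp, ← NormedSpace.exp_add_of_commute]
    · simp
    · refine ContinuousLinearMap.ext fun x => ?_
      simp [E']
  rw [hs]
  let S : Subalgebra ℂ (V5 →L[ℂ] V5) :=
    { carrier := {T | ∀ w ∈ W, T w ∈ W}
      mul_mem' := fun ha hb w hw => ha _ (hb w hw)
      add_mem' := fun ha hb w hw => W.add_mem (ha w hw) (hb w hw)
      algebraMap_mem' := fun r w hw => by
        simpa [Algebra.algebraMap_eq_smul_one] using W.smul_mem r hw }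
  have hS : IsClosed (S : Set (V5 →L[ℂ] V5)) := by
    have : (S : Set (V5 →L[ℂ] V5)) = ⋂ w ∈ W, (fun T : V5 →L[ℂ] V5 => T w) ⁻¹' (W : Set V5) := by
      ext T; simp only [Set.mem_iInter]; rfl
    rw [this]
    exact isClosed_biInter fun w _ => (Submodule.closed_of_finiteDimensional W).preimage (by fun_prop)
  have hm : NormedSpace.exp (s • E') ∈ S := NormedSpace.exp_mem (R := ℂ) hS (S.smul_mem (fun w hw => hW w hw) s)
  exact hm _ h0
section sl2
attribute [local instance] LieRing.ofAssociativeRing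

lemma span_inv {V : Type} [AddCommGroup V] [Module ℂ V] (E : Module.End ℂ V) (S : Set V)
    (W : Submodule ℂ V) (h : ∀ x ∈ S, E x ∈ W) : ∀ w ∈ Submodule.span ℂ S, E w ∈ W := by
  intro w hw
  induction hw using Submodule.span_induction with
  | mem x hx => exact h x hx
  | zero => simp
  | add x y _ _ hx hy => rw [map_add]; exact add_mem hx hy
  | smul a x _ hx => rw [map_smul]; exact Submodule.smul_mem _ a hx

lemma exists_sl2_basis {V : Type} [AddCommGroup V] [Module ℂ V] [FiniteDimensional ℂ V]
    (hV : Module.finrank ℂ V = 5) (E F H : Module.End ℂ V) (hEF : E * F - F * E = H)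
    (hHE : H * E - E * H = (2 : ℂ) • E) (hHF : H * F - F * H = -((2 : ℂ) • F))
    (hirr : ∀ W : Submodule ℂ V, (∀ w ∈ W, E w ∈ W) → (∀ w ∈ W, F w ∈ W) → W = ⊥ ∨ W = ⊤) :
    ∃ b : Module.Basis (Fin 5) ℂ V,
      (E (b 0) = 0 ∧ E (b 1) = (4 : ℂ) • b 0 ∧ E (b 2) = (3 : ℂ) • b 1 ∧ E (b 3) = (2 : ℂ) • b 2 ∧
        E (b 4) = b 3) ∧
      (F (b 0) = b 1 ∧ F (b 1) = (2 : ℂ) • b 2 ∧ F (b 2) = (3 : ℂ) • b 3 ∧ F (b 3) = (4 : ℂ) • b 4 ∧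
        F (b 4) = 0) := by
  have : Nontrivial V := Module.nontrivial_of_finrank_pos (R := ℂ) (by omega)
  have hH : H ≠ 0 := by
    rintro rfl
    have hE : E = 0 := by simpa using hHE.symm
    have hF : F = 0 := by simpa using hHF
    subst hE hF
    obtain ⟨x, hx⟩ := exists_ne (0 : V)
    rcases hirr (ℂ ∙ x) (by simp) (by simp) with h | h
    · rw [Submodule.span_singleton_eq_bot] at h
      exact hx h
    · have := finrank_span_le_card (R := ℂ) ({x} : Set V)
      rw [h, finrank_top] at this
      simp [hV] at this
  have t : IsSl2Triple H E F :=
    ⟨hH, hEF, by rw [Ring.lie_def, hHE, two_smul, two_nsmul], by rw [Ring.lie_def, hHF, two_smul, two_nsmul]⟩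
  obtain ⟨μ, m, hm, P⟩ := IsSl2Triple.exists_hasPrimitiveVectorWith (R := ℂ) (M := V) t
  obtain ⟨n, hn⟩ := P.exists_nat
  have hEs := fun k => P.lie_e_pow_succ_toEnd_f k
  have hHs := fun k => P.lie_h_pow_toEnd_f k
  have hnz := fun i (hi : i ≤ n) => P.pow_toEnd_f_ne_zero_of_eq_nat hn hi
  have hz := P.pow_toEnd_f_eq_zero_of_eq_nat hn
  have h0 := P.lie_e
  have hto : LieModule.toEnd ℂ (Module.End ℂ V) V F = F := rfl
  simp only [hto] at hEs hHs hnz hz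
  replace hEs : ∀ k : ℕ, E ((F ^ (k+1)) m) = ((k + 1) * (μ - k)) • (F ^ k) m := hEs
  replace hHs : ∀ k : ℕ, H ((F ^ k) m) = (μ - 2 * k) • (F ^ k) m := hHs
  replace h0 : E m = 0 := h0
  subst hn
  have hFs : ∀ k : ℕ, F ((F ^ k) m) = (F ^ (k+1)) m := fun k => by rw [pow_succ']; rfl
  have hli : LinearIndependent ℂ (fun i : Fin (n+1) => (F ^ (i : ℕ)) m) :=
    H.eigenvectors_linearIndependent' (fun i : Fin (n+1) => (n : ℂ) - 2 * ((i : ℕ) : ℂ))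
      (fun i j h => by ext; simpa using h) _ fun i => by
        rw [Module.End.hasEigenvector_iff]
        exact ⟨by rw [Module.End.mem_eigenspace_iff]; exact hHs i, hnz _ (by omega)⟩
  have hspan : Submodule.span ℂ (Set.range (fun i : Fin (n+1) => (F ^ (i : ℕ)) m)) = ⊤ := by
    have hmem : ∀ k, k ≤ n → (F ^ k) m ∈ Submodule.span ℂ (Set.range (fun i : Fin (n+1) => (F ^ (i : ℕ)) m)) :=
      fun k hk => Submodule.subset_span ⟨⟨k, by omega⟩, rfl⟩
    refine (hirr _ ?_ ?_).resolve_left ?_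
    · refine span_inv E _ _ ?_
      rintro _ ⟨⟨i, hi⟩, rfl⟩
      rcases i with _ | k
      · simp [h0]
      · simp only [hEs]
        exact Submodule.smul_mem _ _ (hmem _ (by omega))
    · refine span_inv F _ _ ?_
      rintro _ ⟨⟨i, hi⟩, rfl⟩
      simp only [hFs]
      by_cases h : i = n
      · subst h; rw [hz]; exact Submodule.zero_mem _
      · exact hmem _ (by omega)
    · intro h
      have := hmem 0 (by omega)
      rw [h, Submodule.mem_bot] at this
      exact hm (by simpa using this)
  have hn4 : n = 4 := by
    have := Module.finrank_eq_card_basis (Module.Basis.mk hli hspan.ge)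
    simp at this
    omega
  subst hn4
  have hli2 : LinearIndependent ℂ (fun i : Fin 5 => (((i : ℕ).factorial : ℂ)⁻¹) • (F ^ (i : ℕ)) m) := by
    have := hli.units_smul (fun i : Fin 5 => Units.mk0 (((i : ℕ).factorial : ℂ)⁻¹) (by
      simp [Nat.factorial_ne_zero]))
    exact this
  refine ⟨basisOfLinearIndependentOfCardEqFinrank hli2 (by simp [hV]), ?_, ?_⟩
  · have e0 := hEs 0
    have e1 := hEs 1
    have e2 := hEs 2
    have e3 := hEs 3
    norm_num at e0 e1 e2 e3
    simp [h0, e0, e1, e2, e3, Nat.factorial, smul_smul]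
    norm_num
  · have e0 := hFs 0
    have e1 := hFs 1
    have e2 := hFs 2
    have e3 := hFs 3
    have e4 := hFs 4
    norm_num at e0 e1 e2 e3 e4 hz
    simp [hz, e1, e2, e3, e4, Nat.factorial, smul_smul]
    norm_num

end sl2

/-- The quadratic invariant. -/
def qf (x : Fin 5 → ℂ) : ℂ := x 0 * x 4 - 4 * (x 1 * x 3) + 3 * (x 2 * x 2)
/-- The cubic invariant. -/
def cf (x : Fin 5 → ℂ) : ℂ := x 0 * x 2 * x 4 + 2 * (x 1 * x 2 * x 3) - x 2 * x 2 * x 2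
  - x 0 * x 3 * x 3 - x 1 * x 1 * x 4
/-- Derivative of `qf` at `x` in direction `y`. -/
def dq (x y : Fin 5 → ℂ) : ℂ := y 0 * x 4 + x 0 * y 4 - 4 * (y 1 * x 3 + x 1 * y 3) + 6 * (x 2 * y 2)
/-- Derivative of `cf` at `x` in direction `y`. -/
def dc (x y : Fin 5 → ℂ) : ℂ := y 0 * (x 2 * x 4 - x 3 * x 3) + y 1 * (2 * x 2 * x 3 - 2 * x 1 * x 4)
  + y 2 * (x 0 * x 4 + 2 * x 1 * x 3 - 3 * x 2 * x 2) + y 3 * (2 * x 1 * x 2 - 2 * x 0 * x 3)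
  + y 4 * (x 0 * x 2 - x 1 * x 1)

lemma lin5 (B : Fin 5 → Fin 5 → ℂ)
    (hq : ∀ x : Fin 5 → ℂ, dq x (fun i => ∑ j, B i j * x j) = 0)
    (hc : ∀ x : Fin 5 → ℂ, dc x (fun i => ∑ j, B i j * x j) = 0) :
    B 0 0 = 4 * (B 1 1 / 2) ∧
    B 0 1 = 4 * B 3 4 ∧
    B 0 2 = 0 ∧
    B 0 3 = 0 ∧
    B 0 4 = 0 ∧
    B 1 2 = 3 * B 3 4 ∧
    B 1 3 = 0 ∧
    B 1 4 = 0 ∧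
    B 2 0 = 0 ∧
    B 2 1 = 2 * B 1 0 ∧
    B 2 2 = 0 * (B 1 1 / 2) ∧
    B 2 3 = 2 * B 3 4 ∧
    B 2 4 = 0 ∧
    B 3 0 = 0 ∧
    B 3 1 = 0 ∧
    B 3 2 = 3 * B 1 0 ∧
    B 3 3 = -2 * (B 1 1 / 2) ∧
    B 4 0 = 0 ∧
    B 4 1 = 0 ∧
    B 4 2 = 0 ∧
    B 4 3 = 4 * B 1 0 ∧
    B 4 4 = -4 * (B 1 1 / 2) := by
  have h0 := hq ![1, 0, 0, 0, 0]
  have h1 := hq ![0, 1, 0, 0, 0]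
  have h2 := hq ![0, 0, 1, 0, 0]
  have h3 := hq ![0, 0, 0, 1, 0]
  have h4 := hq ![0, 0, 0, 0, 1]
  have h5 := hq ![1, 1, 0, 0, 0]
  have h6 := hq ![1, 0, 1, 0, 0]
  have h7 := hq ![1, 0, 0, 1, 0]
  have h8 := hq ![1, 0, 0, 0, 1]
  have h9 := hq ![0, 1, 1, 0, 0]
  have h10 := hq ![0, 1, 0, 1, 0]
  have h11 := hq ![0, 1, 0, 0, 1]
  have h12 := hq ![0, 0, 1, 1, 0]
  have h13 := hq ![0, 0, 1, 0, 1]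
  have h14 := hq ![0, 0, 0, 1, 1]
  have h15 := hc ![0, 1, 0, 0, 0]
  have h16 := hc ![0, 0, 0, 1, 0]
  have h17 := hc ![1, 0, 1, 0, 0]
  have h18 := hc ![1, 0, 0, 1, 0]
  have h19 := hc ![1, 0, 0, 0, 1]
  have h20 := hc ![0, 1, 0, 1, 0]
  have h21 := hc ![0, 1, 0, -1, 0]
  simp [dq, dc, Fin.sum_univ_five] at h0 h1 h2 h3 h4 h5 h6 h7 h8 h9 h10 h11 h12 h13 h14 h15 h16 h17 h18 h19 h20 h21
  refine ⟨?_, ?_, ?_, ?_, ?_, ?_, ?_, ?_, ?_, ?_, ?_, ?_, ?_, ?_, ?_, ?_, ?_, ?_, ?_, ?_, ?_, ?_⟩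
  · linear_combination (-1/2) * h0 + (4) * h1 + (2) * h3 + (1/2) * h5 + (-2) * h10 + (-1/2) * h15 + (-1) * h16 + (-1) * h18
  · linear_combination (4) * h1 + (-1) * h4 + (1) * h11
  · linear_combination (-12) * h2 + (-1) * h4 + (2/3) * h6 + (1) * h13 + (-2/3) * h17 + (-6) * h19
  · linear_combination (1) * h16
  · linear_combination (1) * h4
  · linear_combination (3) * h1 + (3/2) * h2 + (-1) * h3 + (-3/4) * h4 + (3/4) * h11 + (-1/4) * h12 + (3/4) * h15 + (3/8) * h20 + (3/8) * h21
  · linear_combination (1) * h3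
  · linear_combination (-1) * h3 + (1/4) * h4 + (-1/4) * h14 + (1/4) * h16
  · linear_combination (-1) * h2 + (1/9) * h6 + (-1/9) * h17
  · linear_combination (-1/2) * h0 + (2) * h3 + (1/2) * h7 + (1/2) * h16 + (1/4) * h20 + (-1/4) * h21
  · linear_combination (1) * h2
  · linear_combination (2) * h1 + (-1/2) * h4 + (1/2) * h11 + (1/2) * h15 + (1/4) * h20 + (1/4) * h21
  · linear_combination (1) * h2 + (-1/9) * h6 + (1/9) * h17 + (1) * h19
  · linear_combination (1/4) * h0 + (-1) * h1 + (-1/4) * h5 + (1/4) * h15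
  · linear_combination (1) * h1
  · linear_combination (-3/4) * h0 + (-1) * h1 + (3/2) * h2 + (3) * h3 + (3/4) * h7 + (-1/4) * h9 + (3/4) * h16 + (3/8) * h20 + (-3/8) * h21
  · linear_combination (-1) * h1 + (-1) * h3 + (1) * h10
  · linear_combination (1) * h0
  · linear_combination (1) * h15
  · linear_combination (-1) * h0 + (1/3) * h6 + (2/3) * h17
  · linear_combination (-1) * h0 + (4) * h3 + (1) * h7
  · linear_combination (-1/2) * h0 + (-4) * h1 + (-2) * h3 + (-1) * h4 + (-1/2) * h5 + (1) * h8 + (2) * h10 + (1/2) * h15 + (1) * h16 + (1) * h18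

lemma qf_deriv (b : Module.Basis (Fin 5) ℂ V5) {u : ℂ → V5} {u' : V5} {t : ℂ}
    (h : HasDerivAt u u' t) :
    HasDerivAt (fun s => qf (b.equivFun (u s))) (dq (b.equivFun (u t)) (b.equivFun u')) t := by
  have hc := hasDerivAt_pi.1 (hasDerivAt_linear (b.equivFun : V5 →ₗ[ℂ] V5) h)
  simp only [LinearEquiv.coe_coe] at hc
  have h0 := hc 0
  have h1 := hc 1
  have h2 := hc 2
  have h3 := hc 3
  have h4 := hc 4
  unfold qf dq
  refine (((h0.fun_mul h4).fun_sub ((h1.fun_mul h3).const_mul 4)).fun_add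
    ((h2.fun_mul h2).const_mul 3)).congr_deriv ?_
  ring

lemma cf_deriv (b : Module.Basis (Fin 5) ℂ V5) {u : ℂ → V5} {u' : V5} {t : ℂ}
    (h : HasDerivAt u u' t) :
    HasDerivAt (fun s => cf (b.equivFun (u s))) (dc (b.equivFun (u t)) (b.equivFun u')) t := by
  have hc := hasDerivAt_pi.1 (hasDerivAt_linear (b.equivFun : V5 →ₗ[ℂ] V5) h)
  simp only [LinearEquiv.coe_coe] at hc
  have h0 := hc 0
  have h1 := hc 1
  have h2 := hc 2
  have h3 := hc 3
  have h4 := hc 4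
  unfold cf dc
  refine ((((((h0.fun_mul h2).fun_mul h4).fun_add (((h1.fun_mul h2).fun_mul h3).const_mul 2)).fun_sub
    ((h2.fun_mul h2).fun_mul h2)).fun_sub ((h0.fun_mul h3).fun_mul h3)).fun_sub
    ((h1.fun_mul h1).fun_mul h4)).congr_deriv ?_
  ring

lemma isPoly_coord (b : Module.Basis (Fin 5) ℂ V5) (i : Fin 5) :
    IsPolyFun (fun v => b.equivFun v i) := by
  refine Algebra.subset_adjoin ⟨b.coord i, ?_⟩
  funext v
  simp

lemma isPoly_qf (b : Module.Basis (Fin 5) ℂ V5) : IsPolyFun (fun v => qf (b.equivFun v)) := by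
  have h := isPoly_coord b
  unfold IsPolyFun at *
  unfold qf
  refine add_mem (sub_mem (mul_mem (h 0) (h 4)) ?_) ?_
  · exact mul_mem (Subalgebra.algebraMap_mem _ (4 : ℂ)) (mul_mem (h 1) (h 3))
  · exact mul_mem (Subalgebra.algebraMap_mem _ (3 : ℂ)) (mul_mem (h 2) (h 2))

lemma isPoly_cf (b : Module.Basis (Fin 5) ℂ V5) : IsPolyFun (fun v => cf (b.equivFun v)) := by
  have h := isPoly_coord b
  unfold IsPolyFun at *
  unfold cf
  refine sub_mem (sub_mem (sub_mem (add_mem (mul_mem (mul_mem (h 0) (h 2)) (h 4)) ?_)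
    (mul_mem (mul_mem (h 2) (h 2)) (h 2))) (mul_mem (mul_mem (h 0) (h 3)) (h 3)))
    (mul_mem (mul_mem (h 1) (h 1)) (h 4))
  exact mul_mem (Subalgebra.algebraMap_mem _ (2 : ℂ)) (mul_mem (mul_mem (h 1) (h 2)) (h 3))

/-- A function whose derivatives along the two unipotent flows vanish is invariant. -/
lemma invariant_of_deriv {ρ : SL2 →* (V5 ≃ₗ[ℂ] V5)} (f : V5 → ℂ)
    (hu : ∀ v t, HasDerivAt (fun s => f (ρ (up s) v)) 0 t)
    (hl : ∀ v t, HasDerivAt (fun s => f (ρ (lo s) v)) 0 t) (g : SL2) (v : V5) :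
    f (ρ g v) = f v := by
  have hup0 : up 0 = 1 := by ext i j; fin_cases i <;> fin_cases j <;> simp [up_coe]
  have hlo0 : lo 0 = 1 := by ext i j; fin_cases i <;> fin_cases j <;> simp [lo_coe]
  let K : Subgroup SL2 :=
    { carrier := {g | ∀ v, f (ρ g v) = f v}
      one_mem' := by intro v; simp
      mul_mem' := by
        intro a c ha hc v
        rw [map_mul, LinearEquiv.mul_apply, ha, hc]
      inv_mem' := by
        intro a ha v
        rw [← ha, ← LinearEquiv.mul_apply, ← map_mul]
        simp }
  refine gen_SL2 K ?_ ?_ g v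
  · intro s v
    have := is_const_of_deriv_eq_zero (fun t => (hu v t).differentiableAt) (fun t => (hu v t).deriv) s 0
    simpa [hup0] using this
  · intro s v
    have := is_const_of_deriv_eq_zero (fun t => (hl v t).differentiableAt) (fun t => (hl v t).deriv) s 0
    simpa [hlo0] using this

lemma IsDiff.irr {ρ : SL2 →* (V5 ≃ₗ[ℂ] V5)} {D : M2 →ₗ[ℂ] Module.End ℂ V5} (hD : IsDiff ρ D)
    (hρirr : IsIrreducibleRep ρ) (W : Submodule ℂ V5)
    (hE : ∀ w ∈ W, D !![0, 1; 0, 0] w ∈ W) (hF : ∀ w ∈ W, D !![0, 0; 1, 0] w ∈ W) :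
    W = ⊥ ∨ W = ⊤ := by
  have hup0 : Stmt19.up 0 = 1 := by ext i j; fin_cases i <;> fin_cases j <;> simp [up_coe]
  have hlo0 : Stmt19.lo 0 = 1 := by ext i j; fin_cases i <;> fin_cases j <;> simp [lo_coe]
  have hU : ∀ s, ∀ w ∈ W, ρ (Stmt19.up s) w ∈ W := fun s w hw =>
    ode_mem (D !![0, 1; 0, 0]) W hE (fun s => ρ (Stmt19.up s) w) (by simpa [hup0] using hw) (hD.up w) s
  have hL : ∀ s, ∀ w ∈ W, ρ (Stmt19.lo s) w ∈ W := fun s w hw =>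
    ode_mem (D !![0, 0; 1, 0]) W hF (fun s => ρ (Stmt19.lo s) w) (by simpa [hlo0] using hw) (hD.lo w) s
  let K : Subgroup SL2 :=
    { carrier := {g | (∀ w ∈ W, ρ g w ∈ W) ∧ ∀ w ∈ W, ρ g⁻¹ w ∈ W}
      one_mem' := ⟨fun w hw => by simpa using hw, fun w hw => by rw [inv_one, map_one]; exact hw⟩
      mul_mem' := by
        rintro a c ⟨ha, ha'⟩ ⟨hc, hc'⟩
        refine ⟨fun w hw => ?_, fun w hw => ?_⟩
        · rw [map_mul, LinearEquiv.mul_apply]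
          exact ha _ (hc _ hw)
        · rw [_root_.mul_inv_rev, map_mul, LinearEquiv.mul_apply]
          exact hc' _ (ha' _ hw)
      inv_mem' := by
        rintro a ⟨ha, ha'⟩
        exact ⟨ha', by simpa using ha⟩ }
  have hui : ∀ s, (Stmt19.up s)⁻¹ = Stmt19.up (-s) := fun s => by
    rw [inv_eq_iff_mul_eq_one]
    ext i j; fin_cases i <;> fin_cases j <;> simp [up_coe]
  have hli : ∀ s, (Stmt19.lo s)⁻¹ = Stmt19.lo (-s) := fun s => by
    rw [inv_eq_iff_mul_eq_one]
    ext i j; fin_cases i <;> fin_cases j <;> simp [lo_coe]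
  refine hρirr W fun g => (gen_SL2 K ?_ ?_ g).1
  · intro s
    exact ⟨hU s, by rw [hui]; exact hU _⟩
  · intro s
    exact ⟨hL s, by rw [hli]; exact hL _⟩

lemma coords_of (b : Module.Basis (Fin 5) ℂ V5) (A : Module.End ℂ V5) (v : V5) :
    b.equivFun (A v) = fun i => ∑ j, b.equivFun (A (b j)) i * b.equivFun v j := by
  funext i
  conv_lhs => rw [← b.sum_equivFun v]
  simp only [map_sum, map_smul, Finset.sum_apply, Pi.smul_apply, smul_eq_mul]
  exact Finset.sum_congr rfl fun j _ => mul_comm _ _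

lemma tr_X (X : M2) (hX : X 0 0 + X 1 1 = 0) :
    X = X 0 0 • !![1, 0; 0, -1] + X 0 1 • !![0, 1; 0, 0] + X 1 0 • !![0, 0; 1, 0] := by
  have : X 1 1 = - X 0 0 := by linear_combination hX
  ext i j
  fin_cases i <;> fin_cases j <;> simp [this]

lemma tr_lie (X Y : M2) : (X * Y - Y * X) 0 0 + (X * Y - Y * X) 1 1 = 0 := by
  simp [Matrix.mul_apply, Fin.sum_univ_two]
  ring

lemma hH_of {E F H : Module.End ℂ V5} (hHl : E * F - F * E = H) (v : V5) :
    H v = E (F v) - F (E v) := by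
  rw [← hHl]; rfl

lemma coordsE (b : Module.Basis (Fin 5) ℂ V5) (E : Module.End ℂ V5)
    (h : E (b 0) = 0 ∧ E (b 1) = (4 : ℂ) • b 0 ∧ E (b 2) = (3 : ℂ) • b 1 ∧
      E (b 3) = (2 : ℂ) • b 2 ∧ E (b 4) = b 3) (v : V5) :
    b.equivFun (E v) = ![4 * b.equivFun v 1, 3 * b.equivFun v 2,
      2 * b.equivFun v 3, b.equivFun v 4, 0] := by
  obtain ⟨e0, e1, e2, e3, e4⟩ := h
  rw [coords_of]
  simp only [Fin.sum_univ_five, e0, e1, e2, e3, e4, map_smul, map_zero, Pi.smul_apply, Pi.zero_apply,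
    Module.Basis.equivFun_self]
  funext i
  fin_cases i <;> simp

lemma coordsF (b : Module.Basis (Fin 5) ℂ V5) (F : Module.End ℂ V5)
    (h : F (b 0) = b 1 ∧ F (b 1) = (2 : ℂ) • b 2 ∧ F (b 2) = (3 : ℂ) • b 3 ∧
      F (b 3) = (4 : ℂ) • b 4 ∧ F (b 4) = 0) (v : V5) :
    b.equivFun (F v) = ![0, b.equivFun v 0, 2 * b.equivFun v 1,
      3 * b.equivFun v 2, 4 * b.equivFun v 3] := by
  obtain ⟨e0, e1, e2, e3, e4⟩ := h
  rw [coords_of]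
  simp only [Fin.sum_univ_five, e0, e1, e2, e3, e4, map_smul, map_zero, Pi.smul_apply, Pi.zero_apply,
    Module.Basis.equivFun_self]
  funext i
  fin_cases i <;> simp

lemma coordsH (b : Module.Basis (Fin 5) ℂ V5) (E F H : Module.End ℂ V5)
    (hH : E * F - F * E = H)
    (hE : ∀ v, b.equivFun (E v) = ![4 * b.equivFun v 1, 3 * b.equivFun v 2,
      2 * b.equivFun v 3, b.equivFun v 4, 0])
    (hF : ∀ v, b.equivFun (F v) = ![0, b.equivFun v 0, 2 * b.equivFun v 1,
      3 * b.equivFun v 2, 4 * b.equivFun v 3]) (v : V5) :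
    b.equivFun (H v) = ![4 * b.equivFun v 0, 2 * b.equivFun v 1, 0, -2 * b.equivFun v 3,
      -4 * b.equivFun v 4] := by
  rw [hH_of hH, map_sub, hE, hF, hF, hE]
  funext i
  fin_cases i <;> simp only [Pi.sub_apply, Fin.mk_one, Fin.zero_eta, Fin.reduceFinMk, Matrix.cons_val] <;> ring

lemma comb_zero (b : Module.Basis (Fin 5) ℂ V5) (E F H : Module.End ℂ V5)
    (hE : ∀ v, b.equivFun (E v) = ![4 * b.equivFun v 1, 3 * b.equivFun v 2,
      2 * b.equivFun v 3, b.equivFun v 4, 0])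
    (hF : ∀ v, b.equivFun (F v) = ![0, b.equivFun v 0, 2 * b.equivFun v 1,
      3 * b.equivFun v 2, 4 * b.equivFun v 3])
    (hH : ∀ v, b.equivFun (H v) = ![4 * b.equivFun v 0, 2 * b.equivFun v 1, 0, -2 * b.equivFun v 3,
      -4 * b.equivFun v 4]) (α β γ : ℂ) (h : α • H + β • E + γ • F = 0) :
    α = 0 ∧ β = 0 ∧ γ = 0 := by
  have key : ∀ v, α • b.equivFun (H v) + β • b.equivFun (E v) + γ • b.equivFun (F v) = 0 := by
    intro v
    have := congrArg b.equivFun (LinearMap.congr_fun h v)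
    simpa only [LinearMap.add_apply, LinearMap.smul_apply, map_add, map_smul, LinearMap.zero_apply,
      map_zero] using this
  have h0 := key (b 0)
  have h4 := key (b 4)
  rw [hE, hF, hH] at h0 h4
  have h00 := congrFun h0 0
  have h01 := congrFun h0 1
  have h43 := congrFun h4 3
  simp only [Pi.add_apply, Pi.smul_apply, Pi.zero_apply, Matrix.cons_val, Module.Basis.equivFun_self] at h00 h01 h43
  simp at h00 h01 h43
  exact ⟨h00, h43, h01⟩

lemma comb_eq (b : Module.Basis (Fin 5) ℂ V5) (E F H A : Module.End ℂ V5)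
    (hE : ∀ v, b.equivFun (E v) = ![4 * b.equivFun v 1, 3 * b.equivFun v 2,
      2 * b.equivFun v 3, b.equivFun v 4, 0])
    (hF : ∀ v, b.equivFun (F v) = ![0, b.equivFun v 0, 2 * b.equivFun v 1,
      3 * b.equivFun v 2, 4 * b.equivFun v 3])
    (hH : ∀ v, b.equivFun (H v) = ![4 * b.equivFun v 0, 2 * b.equivFun v 1, 0, -2 * b.equivFun v 3,
      -4 * b.equivFun v 4])
    (hq : ∀ v, dq (b.equivFun v) (b.equivFun (A v)) = 0)
    (hc : ∀ v, dc (b.equivFun v) (b.equivFun (A v)) = 0) :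
    ∃ α β γ : ℂ, A = α • H + β • E + γ • F := by
  obtain ⟨B, hB⟩ : ∃ B : Fin 5 → Fin 5 → ℂ, ∀ v,
      b.equivFun (A v) = fun i => ∑ j, B i j * b.equivFun v j :=
    ⟨fun i j => b.equivFun (A (b j)) i, coords_of b A⟩
  have key := lin5 B
    (by
      intro x
      have h2 := hq (b.equivFun.symm x)
      rw [hB, LinearEquiv.apply_symm_apply] at h2
      exact h2)
    (by
      intro x
      have h2 := hc (b.equivFun.symm x)
      rw [hB, LinearEquiv.apply_symm_apply] at h2
      exact h2)
  obtain ⟨a1, a2, a3, a4, a5, a6, a7, a8, a9, a10, a11, a12, a13, a14, a15, a16, a17, a18, a19,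
    a20, a21, a22⟩ := key
  refine ⟨B 1 1 / 2, B 3 4, B 1 0, LinearMap.ext fun v => b.equivFun.injective ?_⟩
  rw [LinearMap.add_apply, LinearMap.add_apply, LinearMap.smul_apply, LinearMap.smul_apply,
    LinearMap.smul_apply, map_add, map_add, map_smul, map_smul, map_smul, hE, hF, hH, hB]
  generalize b.equivFun v = x
  funext i
  fin_cases i <;>
    simp only [Fin.sum_univ_five, Pi.add_apply, Pi.smul_apply, smul_eq_mul, Fin.mk_one, Fin.zero_eta,
      Fin.reduceFinMk, Matrix.cons_val, a1, a2, a3, a4, a5, a6, a7, a8, a9, a10, a11, a12, a13, a14,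
      a15, a16, a17, a18, a19, a20, a21, a22] <;> ring

/-- The structure of the Lie algebra of `G'`. -/
lemma main_struct (ρ : SL2 →* (V5 ≃ₗ[ℂ] V5)) (hρpoly : IsPolynomialRep ρ)
    (hρirr : IsIrreducibleRep ρ) :
    ∃ D : M2 →ₗ[ℂ] Module.End ℂ V5, IsDiff ρ D ∧
      (∀ X : M2, X 0 0 + X 1 1 = 0 → D X = 0 → X = 0) ∧
      (∀ A ∈ lieAlgebraOf (primeGroup ρ.range), ∃ X : M2, X 0 0 + X 1 1 = 0 ∧ A = D X) := by
  obtain ⟨D, hD⟩ := exists_diff ρ hρpoly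
  replace hD : IsDiff ρ D := hD
  have r1 : D !![0, 1; 0, 0] * D !![0, 0; 1, 0] - D !![0, 0; 1, 0] * D !![0, 1; 0, 0]
      = D !![1, 0; 0, -1] := by
    rw [hD.lie _ _ (by simp) (by simp)]
    refine congrArg D ?_
    ext i j
    fin_cases i <;> fin_cases j <;> simp
  have r2 : D !![1, 0; 0, -1] * D !![0, 1; 0, 0] - D !![0, 1; 0, 0] * D !![1, 0; 0, -1]
      = (2 : ℂ) • D !![0, 1; 0, 0] := by
    rw [hD.lie _ _ (by simp) (by simp), ← map_smul]
    refine congrArg D ?_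
    ext i j
    fin_cases i <;> fin_cases j <;> simp
    norm_num
  have r3 : D !![1, 0; 0, -1] * D !![0, 0; 1, 0] - D !![0, 0; 1, 0] * D !![1, 0; 0, -1]
      = -((2 : ℂ) • D !![0, 0; 1, 0]) := by
    rw [hD.lie _ _ (by simp) (by simp), ← map_smul, ← map_neg]
    refine congrArg D ?_
    ext i j
    fin_cases i <;> fin_cases j <;> simp
    norm_num
  have hirr := hD.irr hρirr
  have hup := fun v t => hD.up v t
  have hlo := fun v t => hD.lo v t
  have hX : ∀ X : M2, X 0 0 + X 1 1 = 0 →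
      D X = X 0 0 • D !![1, 0; 0, -1] + X 0 1 • D !![0, 1; 0, 0] + X 1 0 • D !![0, 0; 1, 0] := by
    intro X hX
    conv_lhs => rw [tr_X X hX]
    simp only [map_add, map_smul]
  refine ⟨D, hD, ?_⟩
  generalize D !![0, 1; 0, 0] = E at *
  generalize D !![0, 0; 1, 0] = F at *
  generalize D !![1, 0; 0, -1] = H at *
  obtain ⟨b, hE, hF⟩ := exists_sl2_basis (V := V5) (by simp) E F H r1 r2 r3 hirr
  have hEc := coordsE b E hE
  have hFc := coordsF b F hF
  have hHc := coordsH b E F H r1 hEc hFc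
  refine ⟨?_, ?_⟩
  · intro X hX0 h
    rw [hX X hX0] at h
    obtain ⟨h1, h2, h3⟩ := comb_zero b E F H hEc hFc hHc _ _ _ h
    rw [tr_X X hX0, h1, h2, h3]
    simp
  · rintro A ⟨c, c0, hcm, hc⟩
    have hqi : ∀ s v, qf (b.equivFun (c s v)) = qf (b.equivFun v) := by
      intro s
      refine hcm s (fun v => qf (b.equivFun v)) (isPoly_qf b) ?_
      rintro _ ⟨g, rfl⟩ v
      refine invariant_of_deriv (fun v => qf (b.equivFun v)) ?_ ?_ g v
      · intro v t
        refine (qf_deriv b (hup v t)).congr_deriv ?_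
        rw [hEc]
        simp only [dq, Matrix.cons_val]
        ring
      · intro v t
        refine (qf_deriv b (hlo v t)).congr_deriv ?_
        rw [hFc]
        simp only [dq, Matrix.cons_val]
        ring
    have hci : ∀ s v, cf (b.equivFun (c s v)) = cf (b.equivFun v) := by
      intro s
      refine hcm s (fun v => cf (b.equivFun v)) (isPoly_cf b) ?_
      rintro _ ⟨g, rfl⟩ v
      refine invariant_of_deriv (fun v => cf (b.equivFun v)) ?_ ?_ g v
      · intro v t
        refine (cf_deriv b (hup v t)).congr_deriv ?_
        rw [hEc]
        simp only [dc, Matrix.cons_val]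
        ring
      · intro v t
        refine (cf_deriv b (hlo v t)).congr_deriv ?_
        rw [hFc]
        simp only [dc, Matrix.cons_val]
        ring
    have c0' : ∀ v, c 0 v = v := fun v => by rw [c0]; rfl
    obtain ⟨α, β, γ, h⟩ := comb_eq b E F H A hEc hFc hHc
      (by
        intro v
        have h1 := qf_deriv b (hc v)
        simp only [hqi, c0'] at h1
        exact h1.unique (hasDerivAt_const _ _))
      (by
        intro v
        have h1 := cf_deriv b (hc v)
        simp only [hci, c0'] at h1
        exact h1.unique (hasDerivAt_const _ _))
    refine ⟨!![α, β; γ, -α], by simp, ?_⟩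
    rw [hX _ (by simp), h]
    simp

lemma brE (a b c : ℂ) : !![0, 1; 0, 0] * !![a, b; c, -a] - !![a, b; c, -a] * !![0, 1; 0, 0]
    = !![c, -2 * a; 0, -c] := by
  ext i j
  fin_cases i <;> fin_cases j <;> simp [Matrix.mul_apply, Fin.sum_univ_two]
  ring

lemma brF (a b c : ℂ) : !![0, 0; 1, 0] * !![a, b; c, -a] - !![a, b; c, -a] * !![0, 0; 1, 0]
    = !![-b, 0; 2 * a, - -b] := by
  ext i j
  fin_cases i <;> fin_cases j <;> simp [Matrix.mul_apply, Fin.sum_univ_two]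
  ring

lemma br_entry (a b c x y z : ℂ) (h : !![x, y; z, -x] * !![a, b; c, -a]
      - !![a, b; c, -a] * !![x, y; z, -x] = 0) :
    y * c - b * z = 0 ∧ x * b - y * a - (a * y - b * x) = 0 := by
  have h1 := congrFun (congrFun h 0) 0
  have h2 := congrFun (congrFun h 0) 1
  simp only [Matrix.mul_apply, Fin.sum_univ_two, Matrix.sub_apply, Matrix.zero_apply, Matrix.of_apply,
    Matrix.cons_val] at h1 h2
  constructor
  · linear_combination h1
  · linear_combination h2

lemma tr_form (X : M2) (hX : X 0 0 + X 1 1 = 0) : ∃ a b c : ℂ, X = !![a, b; c, -a] := by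
  refine ⟨X 0 0, X 0 1, X 1 0, ?_⟩
  have : X 1 1 = - X 0 0 := by linear_combination hX
  ext i j
  fin_cases i <;> fin_cases j <;> simp [this]

theorem stmt19
    (ρ : Matrix.SpecialLinearGroup (Fin 2) ℂ →* ((Fin 5 → ℂ) ≃ₗ[ℂ] (Fin 5 → ℂ)))
    (hρpoly : IsPolynomialRep ρ) (hρirr : IsIrreducibleRep ρ)
    (hcenter : ρ (-1) = 1) :
    lieAlgebraOf (primeGroup ρ.range) = lieAlgebraOf ρ.range ∧
    -- the Lie algebra of `G'` has no nonzero abelian ideals (semisimplicity) …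
    (∀ J : Submodule ℂ (Module.End ℂ (Fin 5 → ℂ)),
      (J : Set (Module.End ℂ (Fin 5 → ℂ))) ⊆ lieAlgebraOf (primeGroup ρ.range) →
      (∀ A ∈ lieAlgebraOf (primeGroup ρ.range), ∀ B ∈ J, A * B - B * A ∈ J) →
      (∀ B ∈ J, ∀ B' ∈ J, B * B' - B' * B = 0) → J = ⊥) ∧
    -- … and trivial center
    (∀ A ∈ lieAlgebraOf (primeGroup ρ.range),
      (∀ B ∈ lieAlgebraOf (primeGroup ρ.range), A * B = B * A) → A = 0) := by
  obtain ⟨D, hD, hinj, hmem⟩ := main_struct ρ hρpoly hρirr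
  have hsub : lieAlgebraOf ρ.range ⊆ lieAlgebraOf (primeGroup ρ.range) := by
    rintro A ⟨c, c0, hcm, hc⟩
    exact ⟨c, c0, fun s f _ hf v => hf _ (hcm s) v, hc⟩
  have hDm : ∀ X : M2, X 0 0 + X 1 1 = 0 → D X ∈ lieAlgebraOf ρ.range := by
    intro X hX
    obtain ⟨γ, h0, hγ⟩ := exists_curve X hX
    exact ⟨fun s => ρ (γ s), by simp [h0], fun s => ⟨γ s, rfl⟩, hD γ X h0 hγ⟩
  have hlie : ∀ X Y : M2, X 0 0 + X 1 1 = 0 → Y 0 0 + Y 1 1 = 0 →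
      D X * D Y - D Y * D X = D (X * Y - Y * X) := fun X Y hX hY => hD.lie Y X hY hX
  have tE : (!![0, 1; 0, 0] : M2) 0 0 + (!![0, 1; 0, 0] : M2) 1 1 = 0 := by simp
  have tF : (!![0, 0; 1, 0] : M2) 0 0 + (!![0, 0; 1, 0] : M2) 1 1 = 0 := by simp
  have tX : ∀ a b c : ℂ, (!![a, b; c, -a] : M2) 0 0 + (!![a, b; c, -a] : M2) 1 1 = 0 := by simp
  refine ⟨Set.Subset.antisymm ?_ hsub, ?_, ?_⟩
  · intro A hA
    obtain ⟨X, hX, rfl⟩ := hmem A hA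
    exact hDm X hX
  · intro J hJ hid hab
    rw [Submodule.eq_bot_iff]
    intro B hB
    obtain ⟨X, hX, rfl⟩ := hmem B (hJ hB)
    obtain ⟨a, b, c, rfl⟩ := tr_form X hX
    have step : ∀ Y Z : M2, Y 0 0 + Y 1 1 = 0 → Z 0 0 + Z 1 1 = 0 → D Z ∈ J →
        D (Y * Z - Z * Y) ∈ J := by
      intro Y Z hY hZ hZJ
      rw [← hlie Y Z hY hZ]
      exact hid _ (hsub (hDm Y hY)) _ hZJ
    have fin : ∀ x y z : ℂ, D !![x, y; z, -x] ∈ J →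
        y * c - b * z = 0 ∧ x * b - y * a - (a * y - b * x) = 0 := by
      intro x y z hZJ
      refine br_entry a b c x y z (hinj _ (tr_lie _ _) ?_)
      rw [← hlie _ _ (tX _ _ _) hX]
      exact hab _ hZJ _ hB
    have hE1 := step _ _ tE hX hB
    rw [brE] at hE1
    have hE2 := step _ _ tE (tX _ _ _) hE1
    rw [brE] at hE2
    have hF1 := step _ _ tF hX hB
    rw [brF] at hF1
    have hF2 := step _ _ tF (tX _ _ _) hF1
    rw [brF] at hF2
    have gE2 := (fin _ _ _ hE2).1
    have gF2 := (fin _ _ _ hF2).1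
    have gE1 := (fin _ _ _ hE1).2
    have hc : c = 0 := mul_self_eq_zero.1 (by linear_combination (-1 / 2) * gE2)
    have hb : b = 0 := mul_self_eq_zero.1 (by linear_combination (1 / 2) * gF2)
    have ha : a = 0 := mul_self_eq_zero.1 (by
      linear_combination (1 / 4) * gE1 - (b / 2) * hc)
    have h0 : (!![a, b; c, -a] : M2) = 0 := by
      rw [ha, hb, hc]
      ext i j
      fin_cases i <;> fin_cases j <;> simp
    rw [h0, map_zero]
  · intro A hA hcomm
    obtain ⟨X, hX, rfl⟩ := hmem A hA
    obtain ⟨a, b, c, rfl⟩ := tr_form X hX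
    have hz : ∀ x y z : ℂ, y * c - b * z = 0 ∧ x * b - y * a - (a * y - b * x) = 0 := by
      intro x y z
      refine br_entry a b c x y z (hinj _ (tr_lie _ _) ?_)
      rw [← hlie _ _ (tX _ _ _) hX, sub_eq_zero]
      exact (hcomm _ (hsub (hDm _ (tX _ _ _)))).symm
    have hc : c = 0 := by linear_combination (hz 0 1 0).1
    have hb : b = 0 := by linear_combination -(hz 0 0 1).1
    have ha : a = 0 := by linear_combination (-1 / 2) * (hz 0 1 0).2
    have h0 : (!![a, b; c, -a] : M2) = 0 := by
      rw [ha, hb, hc]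
      ext i j
      fin_cases i <;> fin_cases j <;> simp
    rw [h0, map_zero]

end Stmt19
end
end
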